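/- arXiv:math/9907154 — 8 statements merged into one kernel-verified Lean document; each statement's English description precedes it below -/
import Mathlib

section
/- Let d, n, m be positive integers and V = ℂ^d. Two pairs (F, F′) and (G, G′), each consisting of an n-step flag and an m-step flag in V, lie in the same orbit of the diagonal GL(V)-action if and only if their invariant matrices coincide, i.e. a_{ij}(F, F′) = a_{ij}(G, G′) for all 1 ≤ i ≤ n, 1 ≤ j ≤ m. -/
open Module Submodule

/-- An `n`-step flag in `V = ℂ^d`: a chain of subspaces
`0 = F_0 ⊆ F_1 ⊆ ⋯ ⊆ F_n = V`. -/
def IsFlag {d n : ℕ} (F : Fin (n + 1) → Submodule ℂ (Fin d → ℂ)) : Prop :=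
  Monotone F ∧ F 0 = ⊥ ∧ F (Fin.last n) = ⊤

/-- The invariant matrix of a pair of flags: its `(i,j)`-entry is
`dim_ℂ (F_i ∩ F'_j) / ((F_{i−1} ∩ F'_j) + (F_i ∩ F'_{j−1}))`. -/
noncomputable def invMatrix {d n m : ℕ} (F : Fin (n + 1) → Submodule ℂ (Fin d → ℂ))
    (F' : Fin (m + 1) → Submodule ℂ (Fin d → ℂ)) (i : Fin n) (j : Fin m) : ℕ :=
  Module.finrank ℂ
    (↥(F i.succ ⊓ F' j.succ) ⧸
      Submodule.comap (F i.succ ⊓ F' j.succ).subtype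
        ((F i.castSucc ⊓ F' j.succ) ⊔ (F i.succ ⊓ F' j.castSucc)))

/-- Two pairs of flags lie in the same orbit of the diagonal `GL(V)`-action. -/
def SameOrbit {d n m : ℕ}
    (p q : (Fin (n + 1) → Submodule ℂ (Fin d → ℂ)) × (Fin (m + 1) → Submodule ℂ (Fin d → ℂ))) :
    Prop :=
  ∃ g : (Fin d → ℂ) ≃ₗ[ℂ] (Fin d → ℂ),
    (∀ i, (p.1 i).map (g : (Fin d → ℂ) →ₗ[ℂ] (Fin d → ℂ)) = q.1 i) ∧
    (∀ j, (p.2 j).map (g : (Fin d → ℂ) →ₗ[ℂ] (Fin d → ℂ)) = q.2 j)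

theorem aux_compl {d : ℕ} (A B : Submodule ℂ (Fin d → ℂ)) (hAB : A ≤ B) :
    ∃ W : Submodule ℂ (Fin d → ℂ), W ≤ B ∧ W ⊓ A = ⊥ ∧ B ≤ A ⊔ W ∧
      finrank ℂ W = finrank ℂ (↥B ⧸ A.comap B.subtype) := by
  obtain ⟨W, hW⟩ := Submodule.exists_isCompl (A.comap B.subtype)
  have hA : (A.comap B.subtype).map B.subtype = A := by
    rw [Submodule.map_comap_subtype]; exact inf_eq_right.mpr hAB
  refine ⟨W.map B.subtype, Submodule.map_subtype_le _ _, ?_, ?_, ?_⟩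
  · rw [← hA, ← Submodule.map_inf _ B.injective_subtype, inf_comm, hW.inf_eq_bot,
      Submodule.map_bot]
  · conv_rhs => rw [← hA]
    rw [← Submodule.map_sup, hW.sup_eq_top, Submodule.map_subtype_top]
  · rw [(Submodule.equivMapOfInjective B.subtype B.injective_subtype W).symm.finrank_eq]
    exact (Submodule.quotientEquivOfIsCompl _ _ hW).finrank_eq.symm

theorem aux_finrank {d : ℕ} (A B : Submodule ℂ (Fin d → ℂ)) (hAB : A ≤ B) :
    finrank ℂ (↥B ⧸ A.comap B.subtype) + finrank ℂ A = finrank ℂ B := by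
  rw [← Submodule.finrank_quotient_add_finrank (A.comap B.subtype)]
  congr 1
  exact (Submodule.comapSubtypeEquivOfLe hAB).finrank_eq.symm

theorem aux_decomp {d n m : ℕ} (F : Fin (n + 1) → Submodule ℂ (Fin d → ℂ))
    (F' : Fin (m + 1) → Submodule ℂ (Fin d → ℂ)) (hF : IsFlag F) (hF' : IsFlag F') :
    ∃ (W : Fin n × Fin m → Submodule ℂ (Fin d → ℂ))
      (E : (∀ p, W p) ≃ₗ[ℂ] (Fin d → ℂ)),
      (∀ p, finrank ℂ (W p) = invMatrix F F' p.1 p.2) ∧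
      (∀ i j, F i ⊓ F' j =
        ⨆ p : Fin n × Fin m, ⨆ _ : p.1.castSucc < i ∧ p.2.castSucc < j, W p) ∧
      (∀ w, E w = ∑ p, (w p : Fin d → ℂ)) := by
  obtain ⟨hm, h0, h1⟩ := hF
  obtain ⟨hm', h0', h1'⟩ := hF'
  have key : ∀ p : Fin n × Fin m, _ := fun p => aux_compl
    ((F p.1.castSucc ⊓ F' p.2.succ) ⊔ (F p.1.succ ⊓ F' p.2.castSucc))
    (F p.1.succ ⊓ F' p.2.succ)
    (sup_le (inf_le_inf_right _ (hm (Fin.castSucc_le_succ _)))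
      (inf_le_inf_left _ (hm' (Fin.castSucc_le_succ _))))
  choose W hWle hWbot hWsup hWrank using key
  have hle : ∀ i j, F i ⊓ F' j ≤
        ⨆ p : Fin n × Fin m, ⨆ _ : p.1.castSucc < i ∧ p.2.castSucc < j, W p := by
    intro i
    induction i using Fin.induction with
    | zero => intro j; simp [h0]
    | succ i ih =>
      intro j
      induction j using Fin.induction with
      | zero => simp [h0']
      | succ j jh =>
        refine (hWsup (i, j)).trans (sup_le (sup_le ((ih _).trans ?_) (jh.trans ?_)) ?_)
        · refine iSup_mono fun p => iSup_mono' fun h => ⟨⟨h.1.trans (Fin.castSucc_lt_succ), h.2⟩, le_rfl⟩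
        · refine iSup_mono fun p => iSup_mono' fun h => ⟨⟨h.1, h.2.trans (Fin.castSucc_lt_succ)⟩, le_rfl⟩
        · exact le_iSup₂_of_le (i, j) ⟨Fin.castSucc_lt_succ, Fin.castSucc_lt_succ⟩ le_rfl
  have hspan : ∀ i j, F i ⊓ F' j =
        ⨆ p : Fin n × Fin m, ⨆ _ : p.1.castSucc < i ∧ p.2.castSucc < j, W p := by
    intro i j
    refine le_antisymm (hle i j) (iSup₂_le fun p hp => (hWle p).trans (inf_le_inf (hm ?_) (hm' ?_)))
    · exact Fin.castSucc_lt_iff_succ_le.mp hp.1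
    · exact Fin.castSucc_lt_iff_succ_le.mp hp.2
  let Φ : (∀ p, W p) →ₗ[ℂ] (Fin d → ℂ) :=
    ∑ p, (W p).subtype ∘ₗ LinearMap.proj p
  have hΦ : ∀ w, Φ w = ∑ p, (w p : Fin d → ℂ) := by
    intro w; simp [Φ]
  have hinj : Function.Injective Φ := by
    rw [injective_iff_map_eq_zero]
    intro w hw
    rw [hΦ] at hw
    by_contra hne
    have hex : (Finset.univ.filter fun p => w p ≠ 0).Nonempty := by
      obtain ⟨p, hp⟩ := Function.ne_iff.mp hne
      exact ⟨p, by simpa using hp⟩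
    obtain ⟨⟨i, j⟩, hp, hmax⟩ := Finset.exists_max_image _ (fun p => toLex p) hex
    simp only [Finset.mem_filter, Finset.mem_univ, true_and] at hp hmax
    have hmem : (w (i, j) : Fin d → ℂ) ∈ F i.castSucc ⊔ (F i.succ ⊓ F' j.castSucc) := by
      rw [← Finset.add_sum_erase _ _ (Finset.mem_univ (i, j))] at hw
      rw [eq_neg_of_add_eq_zero_left hw]
      refine Submodule.neg_mem _ (Submodule.sum_mem _ fun q hq => ?_)
      by_cases hq0 : w q = 0
      · rw [hq0]; exact Submodule.zero_mem _
      have h2 := hmax q hq0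
      have hqW := hWle q (w q).2
      rw [Prod.Lex.toLex_le_toLex] at h2
      rcases h2 with h2 | ⟨h2, h3⟩
      · exact Submodule.mem_sup_left (hm (Fin.succ_le_castSucc_iff.mpr h2) hqW.1)
      · have h4 : q.2 < j := lt_of_le_of_ne h3 fun h =>
          (Finset.mem_erase.mp hq).1 (Prod.ext h2 h)
        refine Submodule.mem_sup_right ⟨?_, hm' (Fin.succ_le_castSucc_iff.mpr h4) hqW.2⟩
        have h5 := hqW.1
        rw [h2] at h5
        exact h5
    have hpW := hWle (i, j) (w (i, j)).2
    obtain ⟨x, hx, y, hy, hxy⟩ := Submodule.mem_sup.mp hmem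
    have hx' : x ∈ F' j.succ := by
      rw [eq_sub_of_add_eq hxy]
      exact Submodule.sub_mem _ hpW.2 (hm' (Fin.castSucc_le_succ _) hy.2)
    have h6 : (w (i, j) : Fin d → ℂ) ∈ W (i, j) ⊓
        ((F i.castSucc ⊓ F' j.succ) ⊔ (F i.succ ⊓ F' j.castSucc)) :=
      ⟨(w (i, j)).2, Submodule.mem_sup.mpr ⟨x, ⟨hx, hx'⟩, y, hy, hxy⟩⟩
    rw [hWbot (i, j)] at h6
    exact hp (Subtype.ext ((Submodule.mem_bot ℂ).mp h6))
  have hsurj : Function.Surjective Φ := by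
    rw [← LinearMap.range_eq_top, eq_top_iff]
    have h7 := hspan (Fin.last n) (Fin.last m)
    rw [h1, h1', inf_top_eq] at h7
    rw [h7]
    refine iSup₂_le fun p _ x hx => ⟨Pi.single p ⟨x, hx⟩, ?_⟩
    rw [hΦ, Finset.sum_eq_single p]
    · simp
    · intro q _ hq; simp [Pi.single_eq_of_ne hq]
    · simp
  exact ⟨W, LinearEquiv.ofBijective Φ ⟨hinj, hsurj⟩, hWrank, hspan, hΦ⟩

/-- Two pairs `(F, F′)` and `(G, G′)`, each consisting of an `n`-step flag and an
`m`-step flag in `ℂ^d`, lie in the same orbit of the diagonal `GL(V)`-action if and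
only if their invariant matrices coincide. -/
theorem flag_pairs_sameOrbit_iff_invMatrix_eq {d n m : ℕ}
    (hd : 0 < d) (hn : 0 < n) (hm : 0 < m)
    (F G : Fin (n + 1) → Submodule ℂ (Fin d → ℂ))
    (F' G' : Fin (m + 1) → Submodule ℂ (Fin d → ℂ))
    (hF : IsFlag F) (hG : IsFlag G) (hF' : IsFlag F') (hG' : IsFlag G') :
    SameOrbit (F, F') (G, G') ↔ ∀ (i : Fin n) (j : Fin m),
      invMatrix F F' i j = invMatrix G G' i j := by
  constructor
  · rintro ⟨g, h1, h2⟩ i j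
    simp only at h1 h2
    have hle : ∀ (F : Fin (n + 1) → Submodule ℂ (Fin d → ℂ))
        (F' : Fin (m + 1) → Submodule ℂ (Fin d → ℂ)), IsFlag F → IsFlag F' →
        (F i.castSucc ⊓ F' j.succ) ⊔ (F i.succ ⊓ F' j.castSucc) ≤ F i.succ ⊓ F' j.succ :=
      fun F F' hF hF' => sup_le (inf_le_inf_right _ (hF.1 (Fin.castSucc_le_succ _)))
        (inf_le_inf_left _ (hF'.1 (Fin.castSucc_le_succ _)))
    have a1 := aux_finrank _ _ (hle F F' hF hF')
    have a2 := aux_finrank _ _ (hle G G' hG hG')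
    have e1 : finrank ℂ ↥(G i.succ ⊓ G' j.succ) = finrank ℂ ↥(F i.succ ⊓ F' j.succ) := by
      rw [← h1, ← h2, ← Submodule.map_inf _ g.injective]
      exact LinearEquiv.finrank_map_eq g _
    have e2 : finrank ℂ ↥((G i.castSucc ⊓ G' j.succ) ⊔ (G i.succ ⊓ G' j.castSucc)) =
        finrank ℂ ↥((F i.castSucc ⊓ F' j.succ) ⊔ (F i.succ ⊓ F' j.castSucc)) := by
      rw [← h1, ← h2, ← h1, ← h2, ← Submodule.map_inf _ g.injective,
        ← Submodule.map_inf _ g.injective, ← Submodule.map_sup]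
      exact LinearEquiv.finrank_map_eq g _
    unfold invMatrix
    omega
  · intro h
    obtain ⟨W, E, hr, hs, hE⟩ := aux_decomp F F' hF hF'
    obtain ⟨U, D, kr, ks, hD⟩ := aux_decomp G G' hG hG'
    have e : ∀ p, W p ≃ₗ[ℂ] U p := fun p =>
      LinearEquiv.ofFinrankEq _ _ (by rw [hr, kr, h])
    let g : (Fin d → ℂ) ≃ₗ[ℂ] (Fin d → ℂ) :=
      E.symm.trans ((LinearEquiv.piCongrRight e).trans D)
    have hsingle : ∀ p (x : W p), E (Pi.single p x) = x := by
      intro p x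
      rw [hE, Finset.sum_eq_single p]
      · simp
      · intro q _ hq; simp [Pi.single_eq_of_ne hq]
      · simp
    have hg : ∀ p (x : W p), g x = e p x := by
      intro p x
      have : E.symm x = Pi.single p x := by rw [← hsingle p x, E.symm_apply_apply]
      simp only [g, LinearEquiv.trans_apply, this]
      rw [hD, Finset.sum_eq_single p]
      · simp
      · intro q _ hq; simp [Pi.single_eq_of_ne hq]
      · simp
    have hmap : ∀ p, (W p).map (g : (Fin d → ℂ) →ₗ[ℂ] (Fin d → ℂ)) = U p := by
      intro p
      ext y
      constructor
      · rintro ⟨x, hx, rfl⟩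
        have := hg p ⟨x, hx⟩
        simp only at this
        rw [LinearEquiv.coe_coe, this]
        exact (e p _).2
      · intro hy
        refine ⟨(e p).symm ⟨y, hy⟩, ((e p).symm ⟨y, hy⟩).2, ?_⟩
        rw [LinearEquiv.coe_coe, hg, LinearEquiv.apply_symm_apply]
    have hall : ∀ i j, (F i ⊓ F' j).map (g : (Fin d → ℂ) →ₗ[ℂ] (Fin d → ℂ)) = G i ⊓ G' j := by
      intro i j
      rw [hs, ks]
      simp only [Submodule.map_iSup, hmap]
    refine ⟨g, fun i => ?_, fun j => ?_⟩
    · have := hall i (Fin.last m)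
      rwa [hF'.2.2, hG'.2.2, inf_top_eq, inf_top_eq] at this
    · have := hall (Fin.last n) j
      rwa [hF.2.2, hG.2.2, top_inf_eq, top_inf_eq] at this
end

section
/- Let d, n, m be positive integers. The set of orbits of the diagonal GL_d(ℂ)-action on pairs (n-step flag, m-step flag) in ℂ^d is finite, and its cardinality equals the number of n×m matrices of non-negative integers with entry sum d, namely the binomial coefficient C(nm + d − 1, d), which is the ℂ-dimension of the space of homogeneous polynomials of degree d in nm variables (= dim S^d(ℂ^n ⊗ ℂ^m)). -/
open Module Submodule

/-- The orbit of a pair of flags under the diagonal `GL(V)`-action, within the set of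
pairs of an `n`-step flag and an `m`-step flag. -/
def flagOrbit {d n m : ℕ}
    (p : {p : (Fin (n + 1) → Submodule ℂ (Fin d → ℂ)) ×
          (Fin (m + 1) → Submodule ℂ (Fin d → ℂ)) // IsFlag p.1 ∧ IsFlag p.2}) :
    Set {p : (Fin (n + 1) → Submodule ℂ (Fin d → ℂ)) ×
          (Fin (m + 1) → Submodule ℂ (Fin d → ℂ)) // IsFlag p.1 ∧ IsFlag p.2} :=
  {q | SameOrbit p.val q.val}

abbrev FlagIdx {n m : ℕ} (A : Fin n → Fin m → ℕ) : Type :=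
  Σ ij : Fin n × Fin m, Fin (A ij.1 ij.2)

def boxSet {n m : ℕ} (A : Fin n → Fin m → ℕ) (a : Fin (n + 1)) (c : Fin (m + 1)) :
    Set (FlagIdx A) :=
  {s | s.1.1.castSucc < a ∧ s.1.2.castSucc < c}

def AdaptedTo {d n m : ℕ} (A : Fin n → Fin m → ℕ)
    (F : Fin (n + 1) → Submodule ℂ (Fin d → ℂ))
    (F' : Fin (m + 1) → Submodule ℂ (Fin d → ℂ)) : Prop :=
  ∃ b : Module.Basis (FlagIdx A) ℂ (Fin d → ℂ),
    ∀ a c, F a ⊓ F' c = Submodule.span ℂ (b '' boxSet A a c)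

theorem flagIdx_card {n m : ℕ} (A : Fin n → Fin m → ℕ) :
    Fintype.card (FlagIdx A) = ∑ i, ∑ j, A i j := by
  simp [FlagIdx, Fintype.card_sigma, Fintype.sum_prod_type]

theorem fin_telescope {n : ℕ} (f : Fin (n + 1) → ℤ) :
    ∑ i : Fin n, (f i.succ - f i.castSucc) = f (Fin.last n) - f 0 := by
  have h1 := Fin.sum_univ_succ f
  have h2 := Fin.sum_univ_castSucc f
  rw [Finset.sum_sub_distrib]
  linarith

theorem sum_of_rank {n m : ℕ} (A : Fin n → Fin m → ℕ) (r : Fin (n + 1) → Fin (m + 1) → ℕ)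
    (h0 : ∀ c, r 0 c = 0) (h0' : ∀ a, r a 0 = 0)
    (h : ∀ i j, r i.succ j.succ + r i.castSucc j.castSucc =
      r i.castSucc j.succ + r i.succ j.castSucc + A i j) :
    ∑ i, ∑ j, A i j = r (Fin.last n) (Fin.last m) := by
  have key : ∀ i : Fin n, ∑ j, (A i j : ℤ) =
      (r i.succ (Fin.last m) : ℤ) - r i.castSucc (Fin.last m) := by
    intro i
    have := fin_telescope (fun c => (r i.succ c : ℤ) - r i.castSucc c)
    simp only [h0', Nat.cast_zero, sub_zero] at this
    rw [← this]
    refine Finset.sum_congr rfl fun j _ => ?_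
    have := h i j
    zify at this
    linarith
  zify
  simp only [key]
  rw [fin_telescope (fun a => (r a (Fin.last m) : ℤ)), h0]
  simp

theorem adapted_rank {d n m : ℕ} {A : Fin n → Fin m → ℕ}
    {F : Fin (n + 1) → Submodule ℂ (Fin d → ℂ)}
    {F' : Fin (m + 1) → Submodule ℂ (Fin d → ℂ)} (h : AdaptedTo A F F') (a c) :
    Module.finrank ℂ ↥(F a ⊓ F' c) =
      ∑ i : Fin n, ∑ j : Fin m, if i.castSucc < a ∧ j.castSucc < c then A i j else 0 := by
  classical
  obtain ⟨b, hb⟩ := h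
  rw [hb, Set.image_eq_range]
  refine (finrank_span_eq_card (b.linearIndependent.comp (fun x : boxSet A a c => (x : FlagIdx A))
    Subtype.val_injective)).trans ?_
  rw [Fintype.card_subtype, Finset.card_filter, Fintype.sum_sigma, Fintype.sum_prod_type]
  refine Finset.sum_congr rfl fun i _ => Finset.sum_congr rfl fun j _ => ?_
  simp only [boxSet, Set.mem_setOf_eq]
  split_ifs <;> simp

theorem box_sum {n m : ℕ} (A : Fin n → Fin m → ℕ) (r : Fin (n + 1) → Fin (m + 1) → ℕ)
    (hr : ∀ a c, r a c =
      ∑ i : Fin n, ∑ j : Fin m, if i.castSucc < a ∧ j.castSucc < c then A i j else 0)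
    (i j) : r i.succ j.succ + r i.castSucc j.castSucc =
      r i.castSucc j.succ + r i.succ j.castSucc + A i j := by
  have : A i j = ∑ i' : Fin n, ∑ j' : Fin m, if i' = i ∧ j' = j then A i' j' else 0 := by
    simp [ite_and]
  rw [this]
  simp only [hr, ← Finset.sum_add_distrib]
  refine Finset.sum_congr rfl fun i' _ => Finset.sum_congr rfl fun j' _ => ?_
  simp only [Fin.lt_def, Fin.ext_iff, Fin.val_castSucc, Fin.val_succ]
  split_ifs <;> omega

theorem adapted_unique {d n m : ℕ} {A B : Fin n → Fin m → ℕ}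
    {F G : Fin (n + 1) → Submodule ℂ (Fin d → ℂ)}
    {F' G' : Fin (m + 1) → Submodule ℂ (Fin d → ℂ)} (h : AdaptedTo A F F')
    (k : AdaptedTo B G G') (o : SameOrbit (F, F') (G, G')) : A = B := by
  obtain ⟨g, hg, hg'⟩ := o
  funext i j
  have e : ∀ a c, Module.finrank ℂ ↥(F a ⊓ F' c) = Module.finrank ℂ ↥(G a ⊓ G' c) := by
    intro a c
    have : G a ⊓ G' c = (F a ⊓ F' c).map (g : (Fin d → ℂ) →ₗ[ℂ] (Fin d → ℂ)) := by
      rw [Submodule.map_inf _ g.injective]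
      exact (congrArg₂ _ (hg a) (hg' c)).symm
    rw [this, LinearEquiv.finrank_map_eq]
  have h1 := box_sum A (fun a c => Module.finrank ℂ ↥(F a ⊓ F' c)) (adapted_rank h) i j
  have h2 := box_sum B (fun a c => Module.finrank ℂ ↥(G a ⊓ G' c)) (adapted_rank k) i j
  simp only [e] at h1
  omega

theorem adapted_sameOrbit {d n m : ℕ} {A : Fin n → Fin m → ℕ}
    {F G : Fin (n + 1) → Submodule ℂ (Fin d → ℂ)}
    {F' G' : Fin (m + 1) → Submodule ℂ (Fin d → ℂ)}
    (hF : IsFlag F) (hF' : IsFlag F') (hG : IsFlag G) (hG' : IsFlag G')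
    (h : AdaptedTo A F F')
    (k : AdaptedTo A G G') : SameOrbit (F, F') (G, G') := by
  obtain ⟨b, hb⟩ := h
  obtain ⟨b', hb'⟩ := k
  have key : ∀ a c, (F a ⊓ F' c).map
      (b.equiv b' (Equiv.refl _) : (Fin d → ℂ) →ₗ[ℂ] (Fin d → ℂ)) = G a ⊓ G' c := by
    intro a c
    rw [hb, hb', Submodule.map_span, ← Set.image_comp]
    congr 2
    funext s
    simp
  refine ⟨b.equiv b' (Equiv.refl _), fun a => ?_, fun c => ?_⟩
  · simpa [hF'.2.2, hG'.2.2] using key a (Fin.last m)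
  · simpa [hF.2.2, hG.2.2] using key (Fin.last n) c

theorem exists_adapted_flag {d n m : ℕ} (A : Fin n → Fin m → ℕ) (hA : ∑ i, ∑ j, A i j = d) :
    ∃ (F : Fin (n + 1) → Submodule ℂ (Fin d → ℂ)) (F' : Fin (m + 1) → Submodule ℂ (Fin d → ℂ)),
      (IsFlag F ∧ IsFlag F') ∧ AdaptedTo A F F' := by
  let e : Fin d ≃ FlagIdx A := Fintype.equivOfCardEq (by rw [flagIdx_card, hA]; simp)
  let b : Module.Basis (FlagIdx A) ℂ (Fin d → ℂ) := (Pi.basisFun ℂ (Fin d)).reindex e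
  refine ⟨fun a => Submodule.span ℂ (b '' {s | s.1.1.castSucc < a}),
    fun c => Submodule.span ℂ (b '' {s | s.1.2.castSucc < c}), ⟨⟨?_, ?_, ?_⟩, ⟨?_, ?_, ?_⟩⟩, b, ?_⟩
  · intro a a' h
    exact Submodule.span_mono (Set.image_mono fun s hs => lt_of_lt_of_le hs h)
  · simp
  · simp [Fin.castSucc_lt_last, b.span_eq]
  · intro a a' h
    exact Submodule.span_mono (Set.image_mono fun s hs => lt_of_lt_of_le hs h)
  · simp
  · simp [Fin.castSucc_lt_last, b.span_eq]
  · intro a c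
    ext v
    rw [Submodule.mem_inf, b.mem_span_image, b.mem_span_image, b.mem_span_image,
      ← Set.subset_inter_iff]
    rfl

theorem exists_adapted {d n m : ℕ}
    {F : Fin (n + 1) → Submodule ℂ (Fin d → ℂ)}
    {F' : Fin (m + 1) → Submodule ℂ (Fin d → ℂ)}
    (hF : IsFlag F) (hF' : IsFlag F') :
    ∃ A : Fin n → Fin m → ℕ, ∑ i, ∑ j, A i j = d ∧ AdaptedTo A F F' := by
  classical
  have hi : ∀ i : Fin n, F i.castSucc ≤ F i.succ := fun i => hF.1 (Fin.castSucc_lt_succ).le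
  have hj : ∀ j : Fin m, F' j.castSucc ≤ F' j.succ := fun j => hF'.1 (Fin.castSucc_lt_succ).le
  have hle : ∀ (i : Fin n) (j : Fin m), (F i.castSucc ⊓ F' j.succ) ⊔ (F i.succ ⊓ F' j.castSucc) ≤
      F i.succ ⊓ F' j.succ := fun i j =>
    sup_le (inf_le_inf_right _ (hi i)) (inf_le_inf_left _ (hj j))
  choose C hC hC' using fun i j => IsModularLattice.exists_disjoint_and_sup_eq (hle i j)
  let A : Fin n → Fin m → ℕ := fun i j => Module.finrank ℂ (C i j)
  have hsum : ∑ i, ∑ j, A i j = d := by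
    rw [sum_of_rank A (fun a c => Module.finrank ℂ ↥(F a ⊓ F' c))]
    · rw [hF.2.2, hF'.2.2, inf_top_eq, finrank_top]
      simp
    · intro c; simp [hF.2.1]
    · intro c; simp [hF'.2.1]
    · intro i j
      have h1 := Submodule.finrank_sup_add_finrank_inf_eq (F i.castSucc ⊓ F' j.succ)
        (F i.succ ⊓ F' j.castSucc)
      have h2 := Submodule.finrank_sup_add_finrank_inf_eq
        ((F i.castSucc ⊓ F' j.succ) ⊔ (F i.succ ⊓ F' j.castSucc)) (C i j)
      rw [hC' i j, (hC i j).eq_bot, finrank_bot] at h2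
      have h3 : (F i.castSucc ⊓ F' j.succ) ⊓ (F i.succ ⊓ F' j.castSucc) =
          F i.castSucc ⊓ F' j.castSucc := by
        rw [inf_inf_inf_comm, inf_eq_left.2 (hi i), inf_eq_right.2 (hj j)]
      rw [h3] at h1
      change _ = _ + _ + Module.finrank ℂ (C i j)
      omega
  let v : FlagIdx A → (Fin d → ℂ) := fun s =>
    ((Module.finBasis ℂ (C s.1.1 s.1.2)) s.2 : Fin d → ℂ)
  have hCv : ∀ i j, C i j ≤ Submodule.span ℂ (v '' {s | s.1 = (i, j)}) := by
    intro i j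
    have h := congrArg (Submodule.map (C i j).subtype) (Module.finBasis ℂ (C i j)).span_eq
    rw [Submodule.map_span, Submodule.map_top, Submodule.range_subtype] at h
    rw [← h]
    refine Submodule.span_mono ?_
    rintro _ ⟨_, ⟨k, rfl⟩, rfl⟩
    exact ⟨⟨(i, j), k⟩, rfl, rfl⟩
  have hspan : ∀ a c, F a ⊓ F' c = Submodule.span ℂ (v '' boxSet A a c) := by
    intro a c
    apply le_antisymm
    · induction a using Fin.induction generalizing c with
      | zero => simp [hF.2.1]
      | succ i ih =>
        induction c using Fin.induction with
        | zero => simp [hF'.2.1]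
        | succ j ih' =>
          rw [← hC' i j]
          refine sup_le (sup_le ((ih _).trans ?_) (ih'.trans ?_)) ((hCv i j).trans ?_)
          · exact Submodule.span_mono (Set.image_mono fun s hs =>
              ⟨hs.1.trans Fin.castSucc_lt_succ, hs.2⟩)
          · exact Submodule.span_mono (Set.image_mono fun s hs =>
              ⟨hs.1, hs.2.trans Fin.castSucc_lt_succ⟩)
          · refine Submodule.span_mono (Set.image_mono fun s hs => ?_)
            have hs' : s.1 = (i, j) := hs
            simp [boxSet, hs', Fin.castSucc_lt_succ]
    · rw [Submodule.span_le]
      rintro _ ⟨⟨⟨i, j⟩, k⟩, hs, rfl⟩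
      have h1 : v ⟨(i, j), k⟩ ∈ F i.succ ⊓ F' j.succ := by
        rw [← hC' i j]
        exact Submodule.mem_sup_right ((Module.finBasis ℂ (C i j)) k).2
      exact ⟨hF.1 (Fin.castSucc_lt_iff_succ_le.1 hs.1) h1.1, hF'.1 (Fin.castSucc_lt_iff_succ_le.1 hs.2) h1.2⟩
  have htop : ⊤ ≤ Submodule.span ℂ (Set.range v) := by
    have := hspan (Fin.last n) (Fin.last m)
    rw [hF.2.2, hF'.2.2, inf_top_eq] at this
    rw [this]
    exact Submodule.span_mono (Set.image_subset_range _ _)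
  refine ⟨A, hsum, basisOfTopLeSpanOfCardEqFinrank v htop (by rw [flagIdx_card, hsum]; simp), ?_⟩
  simpa using hspan

noncomputable def matEquivSym (n m d : ℕ) :
    {A : Fin n → Fin m → ℕ // ∑ i, ∑ j, A i j = d} ≃ Sym (Fin n × Fin m) d :=
  ((Equiv.curry (Fin n) (Fin m) ℕ).symm.subtypeEquiv
    (by intro A; simp [Fintype.sum_prod_type])).trans
    (Sym.equivNatSumOfFintype (Fin n × Fin m) d).symm

theorem finrank_homog (n m d : ℕ) :
    Module.finrank ℂ (MvPolynomial.homogeneousSubmodule (Fin n × Fin m) ℂ d) =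
      Nat.card (Sym (Fin n × Fin m) d) := by
  rw [MvPolynomial.homogeneousSubmodule_eq_finsupp_supported,
    (AddMonoidAlgebra.supportedEquivFinsupp
      {s : (Fin n × Fin m) →₀ ℕ | s.degree = d}).finrank_eq]
  rw [Nat.card_congr (Sym.equivNatSum (Fin n × Fin m) d)]
  have e : {P : (Fin n × Fin m) →₀ ℕ // P.sum (fun _ ↦ id) = d} ≃
      ({s : (Fin n × Fin m) →₀ ℕ | s.degree = d} : Set _) :=
    (Equiv.refl _).subtypeEquiv (by intro P; rfl)
  haveI : Fintype ({s : (Fin n × Fin m) →₀ ℕ | s.degree = d} : Set _) :=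
    Fintype.ofEquiv _ ((Sym.equivNatSum (Fin n × Fin m) d).trans e)
  rw [Nat.card_congr e, Module.finrank_finsupp_self, Nat.card_eq_fintype_card]

theorem sameOrbit_refl {d n m : ℕ}
    (p : (Fin (n + 1) → Submodule ℂ (Fin d → ℂ)) × (Fin (m + 1) → Submodule ℂ (Fin d → ℂ))) :
    SameOrbit p p := ⟨LinearEquiv.refl _ _, by simp, by simp⟩

theorem flagOrbit_eq {d n m : ℕ} {A : Fin n → Fin m → ℕ}
    {p q : {p : (Fin (n + 1) → Submodule ℂ (Fin d → ℂ)) ×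
          (Fin (m + 1) → Submodule ℂ (Fin d → ℂ)) // IsFlag p.1 ∧ IsFlag p.2}}
    (hp : AdaptedTo A p.1.1 p.1.2) (hq : AdaptedTo A q.1.1 q.1.2) :
    flagOrbit p = flagOrbit q := by
  have aux : ∀ {p : {p : (Fin (n + 1) → Submodule ℂ (Fin d → ℂ)) ×
          (Fin (m + 1) → Submodule ℂ (Fin d → ℂ)) // IsFlag p.1 ∧ IsFlag p.2}},
      AdaptedTo A p.1.1 p.1.2 → flagOrbit p = {r | AdaptedTo A r.1.1 r.1.2} := by
    intro p hp
    ext r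
    constructor
    · intro h
      obtain ⟨B, -, hB⟩ := exists_adapted r.2.1 r.2.2
      have := adapted_unique hp hB h
      subst this
      exact hB
    · intro h
      exact adapted_sameOrbit p.2.1 p.2.2 r.2.1 r.2.2 hp h
  rw [aux hp, aux hq]

theorem orbit_equiv (d n m : ℕ) :
    Nonempty ({A : Fin n → Fin m → ℕ // ∑ i, ∑ j, A i j = d} ≃
      Set.range (flagOrbit (d := d) (n := n) (m := m))) := by
  choose F F' hF hA using fun A : {A : Fin n → Fin m → ℕ // ∑ i, ∑ j, A i j = d} =>
    exists_adapted_flag A.1 A.2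
  refine ⟨Equiv.ofBijective (fun A => ⟨flagOrbit ⟨(F A, F' A), hF A⟩, ⟨_, rfl⟩⟩) ⟨?_, ?_⟩⟩
  · intro A B h
    have h' := congrArg Subtype.val h
    dsimp only at h'
    have : (⟨(F B, F' B), hF B⟩ : {p : (Fin (n + 1) → Submodule ℂ (Fin d → ℂ)) ×
          (Fin (m + 1) → Submodule ℂ (Fin d → ℂ)) // IsFlag p.1 ∧ IsFlag p.2}) ∈
        flagOrbit ⟨(F A, F' A), hF A⟩ := by
      rw [h']
      exact sameOrbit_refl _
    exact Subtype.ext (adapted_unique (hA A) (hA B) this)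
  · rintro ⟨_, p, rfl⟩
    obtain ⟨A, hs, hp⟩ := exists_adapted p.2.1 p.2.2
    exact ⟨⟨A, hs⟩, Subtype.ext (flagOrbit_eq (hA ⟨A, hs⟩) hp)⟩

/-- The set of orbits of the diagonal `GL_d(ℂ)`-action on pairs (n-step flag, m-step
flag) in `ℂ^d` is finite, and its cardinality equals the number of `n × m` matrices of
non-negative integers with entry sum `d`, namely the binomial coefficient
`C(nm + d − 1, d)`, which is the `ℂ`-dimension of the space of homogeneous polynomials
of degree `d` in `nm` variables (= `dim S^d(ℂ^n ⊗ ℂ^m)`). -/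
theorem flag_pair_orbits_finite_card {d n m : ℕ}
    (hd : 0 < d) (hn : 0 < n) (hm : 0 < m) :
    (Set.range (flagOrbit (d := d) (n := n) (m := m))).Finite ∧
    Nat.card (Set.range (flagOrbit (d := d) (n := n) (m := m))) =
      Nat.card {A : Fin n → Fin m → ℕ // ∑ i, ∑ j, A i j = d} ∧
    Nat.card (Set.range (flagOrbit (d := d) (n := n) (m := m))) =
      (n * m + d - 1).choose d ∧
    Nat.card (Set.range (flagOrbit (d := d) (n := n) (m := m))) =
      Module.finrank ℂ (MvPolynomial.homogeneousSubmodule (Fin n × Fin m) ℂ d) := by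
  obtain ⟨e⟩ := orbit_equiv d n m
  have h1 := Nat.card_congr e
  have h2 := Nat.card_congr (matEquivSym n m d)
  have h3 : Nat.card (Sym (Fin n × Fin m) d) = (n * m + d - 1).choose d := by
    rw [Nat.card_eq_fintype_card, Sym.card_sym_eq_choose]
    simp
  refine ⟨?_, h1.symm, ?_, ?_⟩
  · exact @Set.toFinite _ _ (Finite.of_equiv _ ((matEquivSym n m d).symm.trans e))
  · rw [← h1, h2, h3]
  · rw [← h1, h2, finrank_homog]
end

section
/- Let d, n, m, k, a, b be positive integers, x ∈ End_ℂ(ℂ^d), F an x-compatible n-step flag and F″ an x-compatible k-step flag in ℂ^d. Then the following are equivalent: (i) x^a = 0, x^b = 0, and there exists an x-compatible m-step flag F′ in ℂ^d; (ii) x^{min(a,m,b)} = 0. (This is the set-theoretic composition identity ^nZ^m_a ∘ ^mZ^k_b = ^nZ^k_{min(a,m,b)}, where ^nZ^m_a is the set of triples (x, F, F′) with x^a = 0, F an x-compatible n-step flag and F′ an x-compatible m-step flag, and ∘ is composition of correspondences over the shared pair (x, F′).) -/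
open Module Submodule

/-- A flag `(F_i)` is `x`-compatible if `x(F_i) ⊆ F_{i−1}` for all `i = 1, …, n`. -/
def Compatible {d n : ℕ} (x : Module.End ℂ (Fin d → ℂ))
    (F : Fin (n + 1) → Submodule ℂ (Fin d → ℂ)) : Prop :=
  ∀ i : Fin n, (F i.succ).map x ≤ F i.castSucc

/-- The set-theoretic composition identity `ⁿZᵐ_a ∘ ᵐZᵏ_b = ⁿZᵏ_{min(a,m,b)}`:
given `x`, an `x`-compatible `n`-step flag `F` and an `x`-compatible `k`-step flag
`F″`, one has `x^a = 0 ∧ x^b = 0 ∧ (∃ x`-compatible `m`-step flag`)` if and only if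
`x^{min(a,m,b)} = 0`. -/
theorem composition_identity_nZma_mZkb {d n m k a b : ℕ}
    (hd : 0 < d) (hn : 0 < n) (hm : 0 < m) (hk : 0 < k) (ha : 0 < a) (hb : 0 < b)
    (x : Module.End ℂ (Fin d → ℂ))
    (F : Fin (n + 1) → Submodule ℂ (Fin d → ℂ)) (hF : IsFlag F) (hxF : Compatible x F)
    (F'' : Fin (k + 1) → Submodule ℂ (Fin d → ℂ)) (hF'' : IsFlag F'')
    (hxF'' : Compatible x F'') :
    (x ^ a = 0 ∧ x ^ b = 0 ∧
        ∃ F' : Fin (m + 1) → Submodule ℂ (Fin d → ℂ), IsFlag F' ∧ Compatible x F') ↔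
      x ^ min a (min m b) = 0 := by
  constructor
  · rintro ⟨h1, h2, F', ⟨hmono, h0, hlast⟩, hc⟩
    have key : ∀ i : Fin (m + 1), ∀ v ∈ F' i, (x ^ (i : ℕ)) v = 0 := by
      intro i
      induction i using Fin.induction with
      | zero =>
        intro v hv
        rw [h0, Submodule.mem_bot] at hv
        simp [hv]
      | succ i ih =>
        intro v hv
        have h := ih (x v) (hc i (Submodule.mem_map_of_mem hv))
        rw [Fin.val_succ, pow_succ, Module.End.mul_apply]
        simpa using h
    have hxm : x ^ m = 0 := by
      refine LinearMap.ext fun v => ?_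
      have h := key (Fin.last m)
      rw [hlast] at h
      simpa using h v Submodule.mem_top
    rcases min_choice a (min m b) with h | h <;> rw [h]
    · exact h1
    · rcases min_choice m b with h | h <;> rw [h]
      · exact hxm
      · exact h2
  · intro h
    refine ⟨pow_eq_zero_of_le (by omega) h, pow_eq_zero_of_le (by omega) h,
      fun i => LinearMap.ker (x ^ (i : ℕ)), ⟨?_, ?_, ?_⟩, ?_⟩
    · intro i j hij v hv
      rw [LinearMap.mem_ker] at hv ⊢
      have hij' : (i : ℕ) ≤ j := hij
      rw [← Nat.sub_add_cancel hij', pow_add, Module.End.mul_apply, hv, map_zero]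
    · ext v
      simp
    · have hxm : x ^ m = 0 := pow_eq_zero_of_le (by omega) h
      simp [hxm]
    · rintro i _ ⟨v, hv, rfl⟩
      have hv' : (x ^ ((i : ℕ) + 1)) v = 0 := by simpa using hv
      rw [pow_succ, Module.End.mul_apply] at hv'
      simpa using hv'
end

section
/- Let d, n, m be positive integers and x ∈ End_ℂ(ℂ^d). If F is an x-compatible n-step flag and F″ is an x-compatible m-step flag in ℂ^d, then there exists an x-compatible complete flag B in ℂ^d. (Consequently the set-theoretic composition ^nW ∘̂ ^mW, composing ^nW = ^nM ×_{N_n} Ñ and Ñ ×_{N_m} ^mM over the shared complete-flag factor, equals ^nZ^m = {(x, F, F″) : F an x-compatible n-step flag, F″ an x-compatible m-step flag}.) -/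
open Module Submodule

/-- A complete flag in `ℂ^d`: a `d`-step flag with `dim_ℂ F_i = i` for all `i`. -/
def IsCompleteFlag {d : ℕ} (F : Fin (d + 1) → Submodule ℂ (Fin d → ℂ)) : Prop :=
  IsFlag F ∧ ∀ i : Fin (d + 1), Module.finrank ℂ (F i) = (i : ℕ)

theorem step_aux {d n : ℕ} (x : Module.End ℂ (Fin d → ℂ))
    (F : Fin (n + 1) → Submodule ℂ (Fin d → ℂ)) (hF : IsFlag F) (hxF : Compatible x F)
    (B : Submodule ℂ (Fin d → ℂ)) :
    ∃ C : Submodule ℂ (Fin d → ℂ), B.map x ≤ B → B ≠ ⊤ →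
      B ≤ C ∧ C.map x ≤ B ∧ Module.finrank ℂ C = Module.finrank ℂ B + 1 := by
  by_cases hB : B.map x ≤ B ∧ B ≠ ⊤
  swap
  · exact ⟨B, fun h1 h2 => absurd ⟨h1, h2⟩ hB⟩
  obtain ⟨hxB, hB⟩ := hB
  have key : ∃ v, v ∉ B ∧ x v ∈ B := by
    by_contra! hcon
    have hall : ∀ i : Fin (n + 1), F i ≤ B := by
      intro i
      induction i using Fin.induction with
      | zero => rw [hF.2.1]; exact bot_le
      | succ i ih =>
        intro v hv
        by_contra hvB
        exact hcon v hvB (ih (hxF i (Submodule.mem_map_of_mem hv)))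
    have := hall (Fin.last n)
    rw [hF.2.2] at this
    exact hB (top_le_iff.mp this)
  obtain ⟨v, hv, hxv⟩ := key
  refine ⟨B ⊔ Submodule.span ℂ {v}, fun _ _ => ⟨le_sup_left, ?_, ?_⟩⟩
  · rw [Submodule.map_sup, Submodule.map_span, Set.image_singleton]
    exact sup_le hxB ((Submodule.span_singleton_le_iff_mem _ _).2 hxv)
  · have hv0 : v ≠ 0 := fun h => hv (h ▸ B.zero_mem)
    have h1 := Submodule.finrank_sup_add_finrank_inf_eq B (Submodule.span ℂ {v})
    have h2 : B ⊓ Submodule.span ℂ {v} = ⊥ :=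
      disjoint_iff.mp ((Submodule.disjoint_span_singleton' hv0).2 hv)
    rw [h2, finrank_bot, finrank_span_singleton hv0] at h1
    simpa using h1

/-- If `F` is an `x`-compatible `n`-step flag and `F″` is an `x`-compatible `m`-step
flag in `ℂ^d`, then there exists an `x`-compatible complete flag `B` in `ℂ^d`.
(Consequently the set-theoretic composition `ⁿW ∘̂ ᵐW` equals `ⁿZᵐ`.) -/
theorem exists_compatible_complete_flag {d n m : ℕ}
    (hd : 0 < d) (hn : 0 < n) (hm : 0 < m)
    (x : Module.End ℂ (Fin d → ℂ))
    (F : Fin (n + 1) → Submodule ℂ (Fin d → ℂ)) (hF : IsFlag F) (hxF : Compatible x F)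
    (F'' : Fin (m + 1) → Submodule ℂ (Fin d → ℂ)) (hF'' : IsFlag F'')
    (hxF'' : Compatible x F'') :
    ∃ B : Fin (d + 1) → Submodule ℂ (Fin d → ℂ), IsCompleteFlag B ∧ Compatible x B := by
  choose nxt hnxt using step_aux x F hF hxF
  let B : ℕ → Submodule ℂ (Fin d → ℂ) := fun k =>
    Nat.rec (motive := fun _ => Submodule ℂ (Fin d → ℂ)) ⊥ (fun _ C => nxt C) k
  have hne : ∀ k : ℕ, k < d → Module.finrank ℂ ↥(B k) = k → B k ≠ ⊤ := by
    intro k hk h1 h2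
    rw [h2, finrank_top, Module.finrank_fin_fun] at h1
    omega
  have hB : ∀ k : ℕ, k ≤ d → (B k).map x ≤ B k ∧ Module.finrank ℂ ↥(B k) = k := by
    intro k
    induction k with
    | zero => intro _; simp [B]
    | succ k ih =>
      intro hk
      obtain ⟨h1, h2⟩ := ih (by omega)
      obtain ⟨a, b, c⟩ := hnxt (B k) h1 (hne k (by omega) h2)
      exact ⟨b.trans a, by rw [← h2]; rw [h2] at c ⊢; exact c⟩
  have hs : ∀ k : ℕ, k < d → B k ≤ B (k+1) ∧ (B (k+1)).map x ≤ B k := by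
    intro k hk
    obtain ⟨h1, h2⟩ := hB k hk.le
    obtain ⟨a, b, c⟩ := hnxt (B k) h1 (hne k hk h2)
    exact ⟨a, b⟩
  refine ⟨fun i => B i, ⟨⟨?_, rfl, ?_⟩, fun i => (hB i (by omega)).2⟩, fun i => (hs i i.2).2⟩
  · exact Fin.monotone_iff_le_succ.2 fun i => (hs i i.2).1
  · apply Submodule.eq_top_of_finrank_eq
    rw [Module.finrank_fin_fun]
    exact (hB d le_rfl).2
end

section
/- Let d be a positive integer. For any two complete flags B, B′ in ℂ^d, the invariant matrix (a_{ij}) of the pair (B, B′) is a d×d permutation matrix; moreover the assignment (B, B′) ↦ (its permutation) induces a bijection between the set of orbits of the diagonal GL_d(ℂ)-action on pairs of complete flags and the symmetric group S_d. -/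
open Module Submodule

theorem invMatrix_formula {d n m : ℕ} (F : Fin (n + 1) → Submodule ℂ (Fin d → ℂ))
    (F' : Fin (m + 1) → Submodule ℂ (Fin d → ℂ)) (hF : Monotone F) (hF' : Monotone F')
    (i : Fin n) (j : Fin m) :
    invMatrix F F' i j + finrank ℂ ↥(F i.castSucc ⊓ F' j.succ)
      + finrank ℂ ↥(F i.succ ⊓ F' j.castSucc)
      = finrank ℂ ↥(F i.succ ⊓ F' j.succ) + finrank ℂ ↥(F i.castSucc ⊓ F' j.castSucc) := by
  have hi : F i.castSucc ≤ F i.succ := hF (Fin.castSucc_le_succ i)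
  have hj : F' j.castSucc ≤ F' j.succ := hF' (Fin.castSucc_le_succ j)
  have hle : (F i.castSucc ⊓ F' j.succ) ⊔ (F i.succ ⊓ F' j.castSucc) ≤ F i.succ ⊓ F' j.succ :=
    sup_le (inf_le_inf_right _ hi) (inf_le_inf_left _ hj)
  have h1 := Submodule.finrank_quotient_add_finrank
    (Submodule.comap (F i.succ ⊓ F' j.succ).subtype
        ((F i.castSucc ⊓ F' j.succ) ⊔ (F i.succ ⊓ F' j.castSucc)))
  have h2 := (Submodule.comapSubtypeEquivOfLe hle).finrank_eq
  have h3 := Submodule.finrank_sup_add_finrank_inf_eq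
    (F i.castSucc ⊓ F' j.succ) (F i.succ ⊓ F' j.castSucc)
  have h4 : (F i.castSucc ⊓ F' j.succ) ⊓ (F i.succ ⊓ F' j.castSucc)
      = F i.castSucc ⊓ F' j.castSucc := by
    apply le_antisymm
    · exact le_inf (inf_le_left.trans inf_le_left) (inf_le_right.trans inf_le_right)
    · exact le_inf (inf_le_inf_left _ hj) (inf_le_inf_right _ hi)
  rw [h4] at h3
  unfold invMatrix
  omega

theorem invMatrix_ne_zero_iff {d n m : ℕ} (F : Fin (n + 1) → Submodule ℂ (Fin d → ℂ))
    (F' : Fin (m + 1) → Submodule ℂ (Fin d → ℂ)) (i : Fin n) (j : Fin m) :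
    invMatrix F F' i j ≠ 0 ↔ ∃ x ∈ F i.succ ⊓ F' j.succ,
      x ∉ (F i.castSucc ⊓ F' j.succ) ⊔ (F i.succ ⊓ F' j.castSucc) := by
  unfold invMatrix
  rw [Ne, Module.finrank_zero_iff, Submodule.Quotient.subsingleton_iff,
    Submodule.comap_subtype_eq_top, SetLike.not_le_iff_exists]

theorem tele {d : ℕ} (f : Fin (d + 1) → ℤ) :
    ∑ j : Fin d, (f j.succ - f j.castSucc) = f (Fin.last d) - f 0 := by
  rw [Finset.sum_sub_distrib]
  have h1 := Fin.sum_univ_succ f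
  have h2 := Fin.sum_univ_castSucc f
  linarith

theorem row_sum {d : ℕ} (B B' : Fin (d + 1) → Submodule ℂ (Fin d → ℂ))
    (h : IsCompleteFlag B) (h' : IsCompleteFlag B') (i : Fin d) :
    ∑ j, invMatrix B B' i j = 1 := by
  have key : ∀ j : Fin d, (invMatrix B B' i j : ℤ) =
      ((finrank ℂ ↥(B i.succ ⊓ B' j.succ) : ℤ) - finrank ℂ ↥(B i.castSucc ⊓ B' j.succ))
      - ((finrank ℂ ↥(B i.succ ⊓ B' j.castSucc) : ℤ) - finrank ℂ ↥(B i.castSucc ⊓ B' j.castSucc)) := by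
    intro j
    have := invMatrix_formula B B' h.1.1 h'.1.1 i j
    omega
  zify
  rw [Finset.sum_congr rfl (fun j _ => key j),
    tele (fun j => (finrank ℂ ↥(B i.succ ⊓ B' j) : ℤ) - finrank ℂ ↥(B i.castSucc ⊓ B' j))]
  have e1 : finrank ℂ ↥(B i.succ ⊓ B' (Fin.last d)) = i + 1 := by
    rw [h'.1.2.2, inf_top_eq, h.2, Fin.val_succ]
  have e2 : finrank ℂ ↥(B i.castSucc ⊓ B' (Fin.last d)) = i := by
    rw [h'.1.2.2, inf_top_eq, h.2, Fin.val_castSucc]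
  have e3 : finrank ℂ ↥(B i.succ ⊓ B' 0) = 0 := by
    rw [h'.1.2.1, inf_bot_eq, finrank_bot]
  have e4 : finrank ℂ ↥(B i.castSucc ⊓ B' 0) = 0 := by
    rw [h'.1.2.1, inf_bot_eq, finrank_bot]
  simp only [e1, e2, e3, e4]
  push_cast
  ring

theorem invMatrix_swap {d : ℕ} (B B' : Fin (d + 1) → Submodule ℂ (Fin d → ℂ))
    (h : IsCompleteFlag B) (h' : IsCompleteFlag B') (i j : Fin d) :
    invMatrix B B' i j = invMatrix B' B j i := by
  have h1 := invMatrix_formula B B' h.1.1 h'.1.1 i j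
  have h2 := invMatrix_formula B' B h'.1.1 h.1.1 j i
  rw [inf_comm (B' _) (B _), inf_comm (B' _) (B _), inf_comm (B' _) (B _),
    inf_comm (B' _) (B _)] at h2
  omega

theorem exists_one {d : ℕ} (a : Fin d → ℕ) (h : ∑ j, a j = 1) :
    ∃ k, ∀ j, a j = if k = j then 1 else 0 := by
  have hne : ∃ k, a k ≠ 0 := by
    by_contra! hc
    simp [hc] at h
  obtain ⟨k, hk⟩ := hne
  have h2 := Finset.add_sum_erase Finset.univ a (Finset.mem_univ k)
  refine ⟨k, fun j => ?_⟩
  split_ifs with hj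
  · subst hj; omega
  · have h3 : ∑ x ∈ Finset.univ.erase k, a x = 0 := by omega
    exact Finset.sum_eq_zero_iff.1 h3 j (by simp [Ne.symm hj])

theorem exists_perm {d : ℕ} (B B' : Fin (d + 1) → Submodule ℂ (Fin d → ℂ))
    (h : IsCompleteFlag B) (h' : IsCompleteFlag B') :
    ∃ σ : Equiv.Perm (Fin d), ∀ i j : Fin d,
        invMatrix B B' i j = if σ i = j then 1 else 0 := by
  choose f hf using fun i => exists_one _ (row_sum B B' h h' i)
  choose g hg using fun j => exists_one _ (row_sum B' B h' h j)
  have hfg : ∀ i j, f i = j ↔ g j = i := by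
    intro i j
    have := invMatrix_swap B B' h h' i j
    rw [hf, hg] at this
    by_cases h1 : f i = j <;> by_cases h2 : g j = i <;> simp_all
  exact ⟨⟨f, g, fun i => (hfg _ _).1 rfl, fun j => (hfg _ _).2 rfl⟩, hf⟩

theorem flag_eq_span {d : ℕ} (B : Fin (d + 1) → Submodule ℂ (Fin d → ℂ))
    (h : IsCompleteFlag B) (v : Fin d → Fin d → ℂ) (h1 : ∀ i, v i ∈ B i.succ)
    (h2 : ∀ i, v i ∉ B i.castSucc) (k : Fin (d + 1)) :
    B k = span ℂ (v '' {i | i.castSucc < k}) := by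
  induction k using Fin.induction with
  | zero => simp [h.1.2.1]
  | succ k ih =>
    have hs : {i : Fin d | i.castSucc < k.succ} = insert k {i | i.castSucc < k.castSucc} := by
      ext i
      simp only [Set.mem_ofPred_eq, Set.mem_insert_iff, Fin.lt_def, Fin.ext_iff, Fin.val_castSucc,
        Fin.val_succ]
      omega
    rw [hs, Set.image_insert_eq, Submodule.span_insert, ← ih]
    symm
    have hle : span ℂ {v k} ⊔ B k.castSucc ≤ B k.succ := by
      refine sup_le ?_ (h.1.1 (Fin.castSucc_le_succ k))
      rw [Submodule.span_singleton_le_iff_mem]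
      exact h1 k
    apply Submodule.eq_of_le_of_finrank_le hle
    have hlt : B k.castSucc < span ℂ {v k} ⊔ B k.castSucc := by
      refine lt_of_le_of_ne le_sup_right fun he => h2 k ?_
      rw [he]
      exact Submodule.mem_sup_left (Submodule.mem_span_singleton_self _)
    have := Submodule.finrank_lt_finrank_of_lt hlt
    rw [h.2] at this ⊢
    simpa using this

theorem exists_adapted_s9 {d : ℕ} (B B' : Fin (d + 1) → Submodule ℂ (Fin d → ℂ))
    (h : IsCompleteFlag B) (h' : IsCompleteFlag B') (σ : Equiv.Perm (Fin d))
    (hσ : ∀ i j : Fin d, invMatrix B B' i j = if σ i = j then 1 else 0) :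
    ∃ v : Basis (Fin d) ℂ (Fin d → ℂ), (∀ k, B k = span ℂ (v '' {i | i.castSucc < k})) ∧
      (∀ k, B' k = span ℂ (v '' {i | (σ i).castSucc < k})) := by
  have hx : ∀ i, ∃ x ∈ B i.succ ⊓ B' (σ i).succ,
      x ∉ (B i.castSucc ⊓ B' (σ i).succ) ⊔ (B i.succ ⊓ B' (σ i).castSucc) := by
    intro i
    rw [← invMatrix_ne_zero_iff, hσ]
    simp
  choose v hv hv' using hx
  have e1 := flag_eq_span B h v (fun i => (hv i).1)
    (fun i hi => hv' i (Submodule.mem_sup_left ⟨hi, (hv i).2⟩))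
  have e2 := flag_eq_span B' h' (fun j => v (σ.symm j))
    (fun j => by simpa using (hv (σ.symm j)).2)
    (fun j hj => hv' (σ.symm j) (Submodule.mem_sup_right ⟨(hv _).1, by simpa using hj⟩))
  have htop : ⊤ ≤ span ℂ (Set.range v) := by
    rw [← h.1.2.2, e1]
    exact Submodule.span_mono (Set.image_subset_range _ _)
  have hli : LinearIndependent ℂ v :=
    linearIndependent_of_top_le_span_of_card_eq_finrank htop (by simp)
  refine ⟨Basis.mk hli htop, ?_, ?_⟩
  · simpa using e1
  · intro k
    rw [e2 k]
    congr 1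
    ext x
    simp only [Set.mem_image, Set.mem_ofPred_eq, Basis.coe_mk]
    constructor
    · rintro ⟨j, hj, rfl⟩
      exact ⟨σ.symm j, by simpa using hj, rfl⟩
    · rintro ⟨i, hi, rfl⟩
      exact ⟨σ i, hi, by simp⟩

theorem sameOrbit_of {d : ℕ} (B B' G G' : Fin (d + 1) → Submodule ℂ (Fin d → ℂ))
    (hB : IsCompleteFlag B) (hB' : IsCompleteFlag B')
    (hG : IsCompleteFlag G) (hG' : IsCompleteFlag G') (σ : Equiv.Perm (Fin d))
    (hσ : ∀ i j : Fin d, invMatrix B B' i j = if σ i = j then 1 else 0)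
    (hτ : ∀ i j : Fin d, invMatrix G G' i j = if σ i = j then 1 else 0) :
    SameOrbit (B, B') (G, G') := by
  obtain ⟨v, v1, v2⟩ := exists_adapted_s9 B B' hB hB' σ hσ
  obtain ⟨w, w1, w2⟩ := exists_adapted_s9 G G' hG hG' σ hτ
  have hs : ∀ s : Set (Fin d), (span ℂ (v '' s)).map
      ((v.equiv w (Equiv.refl _) : (Fin d → ℂ) ≃ₗ[ℂ] (Fin d → ℂ)) :
        (Fin d → ℂ) →ₗ[ℂ] (Fin d → ℂ)) = span ℂ (w '' s) := by
    intro s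
    rw [Submodule.map_span, Set.image_image]
    simp
  refine ⟨v.equiv w (Equiv.refl _), fun i => ?_, fun j => ?_⟩
  · simp only [v1, w1, hs]
  · simp only [v2, w2, hs]

theorem invMatrix_of_sameOrbit {d : ℕ} (B B' G G' : Fin (d + 1) → Submodule ℂ (Fin d → ℂ))
    (hB : IsCompleteFlag B) (hB' : IsCompleteFlag B')
    (hG : IsCompleteFlag G) (hG' : IsCompleteFlag G')
    (h : SameOrbit (B, B') (G, G')) (i j : Fin d) :
    invMatrix B B' i j = invMatrix G G' i j := by
  obtain ⟨g, g1, g2⟩ := h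
  have hr : ∀ i j, finrank ℂ ↥(G i ⊓ G' j) = finrank ℂ ↥(B i ⊓ B' j) := by
    intro i j
    have e1 := g1 i
    have e2 := g2 j
    simp only at e1 e2
    rw [← e1, ← e2, ← Submodule.map_inf _ g.injective]
    exact LinearEquiv.finrank_map_eq g _
  have h1 := invMatrix_formula B B' hB.1.1 hB'.1.1 i j
  have h2 := invMatrix_formula G G' hG.1.1 hG'.1.1 i j
  simp only [hr] at h2
  omega

theorem perm_unique {d : ℕ} (σ τ : Equiv.Perm (Fin d))
    (h : ∀ i, (if τ i = σ i then 1 else 0 : ℕ) ≠ 0) : τ = σ := by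
  ext i
  have := h i
  split_ifs at this with hh
  · rw [hh]
  · simp at this

theorem stdFlag_complete {d : ℕ} (v : Basis (Fin d) ℂ (Fin d → ℂ)) :
    IsCompleteFlag (fun k : Fin (d + 1) => span ℂ (v '' {i | i.castSucc < k})) := by
  refine ⟨⟨?_, ?_, ?_⟩, ?_⟩
  · intro a b hab
    exact Submodule.span_mono (Set.image_mono fun i hi => lt_of_lt_of_le hi hab)
  · simp
  · simp [Fin.castSucc_lt_last, v.span_eq]
  · intro k
    classical
    have hli := v.linearIndependent.comp (fun i : Fin (k : ℕ) => (⟨i, by omega⟩ : Fin d))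
      (fun a b hab => by simpa [Fin.ext_iff] using hab)
    have := finrank_span_eq_card hli
    rw [Fintype.card_fin] at this
    rw [← this]
    suffices hs : (v '' {i | i.castSucc < k}) =
        Set.range (v ∘ fun i : Fin (k : ℕ) => (⟨i, by omega⟩ : Fin d)) by
      exact congrArg (fun t => finrank ℂ ↥(span ℂ t)) hs
    ext x
    simp only [Set.mem_image, Set.mem_ofPred_eq, Set.mem_range, Function.comp]
    constructor
    · rintro ⟨i, hi, rfl⟩
      exact ⟨⟨i, hi⟩, rfl⟩
    · rintro ⟨i, rfl⟩
      exact ⟨⟨i, by omega⟩, i.2, rfl⟩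

theorem exists_flags {d : ℕ} (σ : Equiv.Perm (Fin d)) :
      ∃ B B' : Fin (d + 1) → Submodule ℂ (Fin d → ℂ),
        IsCompleteFlag B ∧ IsCompleteFlag B' ∧
        ∀ i j : Fin d, invMatrix B B' i j = if σ i = j then 1 else 0 := by
  let e := Pi.basisFun ℂ (Fin d)
  have hB := stdFlag_complete e
  have hB' := stdFlag_complete (e.reindex σ)
  refine ⟨_, _, hB, hB', ?_⟩
  obtain ⟨τ, hτ⟩ := exists_perm _ _ hB hB'
  suffices τ = σ by rwa [this] at hτ
  apply perm_unique
  intro i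
  rw [← hτ, invMatrix_ne_zero_iff]
  refine ⟨e i, ⟨?_, ?_⟩, ?_⟩
  · exact Submodule.subset_span ⟨i, by simp, rfl⟩
  · exact Submodule.subset_span ⟨σ i, by simp, by simp⟩
  · intro hmem
    have hle : (span ℂ (e '' {k | k.castSucc < i.castSucc})
          ⊓ span ℂ ((e.reindex σ) '' {k | k.castSucc < (σ i).succ})) ⊔
        (span ℂ (e '' {k | k.castSucc < i.succ})
          ⊓ span ℂ ((e.reindex σ) '' {k | k.castSucc < (σ i).castSucc}))
        ≤ LinearMap.ker (e.coord i) := by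
      refine sup_le (inf_le_left.trans ?_) (inf_le_right.trans ?_)
      · rw [Submodule.span_le]
        rintro _ ⟨k, hk, rfl⟩
        have : k ≠ i := by rintro rfl; simp at hk
        simp [this]
      · rw [Submodule.span_le]
        rintro _ ⟨k, hk, rfl⟩
        have : σ.symm k ≠ i := by rintro rfl; simp at hk
        simp only [SetLike.mem_coe, LinearMap.mem_ker, Basis.reindex_apply, Basis.coord_apply,
          Basis.repr_self, Finsupp.single_apply, this, if_false]
    have := hle hmem
    simp at this

/-- For any two complete flags `B, B′` in `ℂ^d` the invariant matrix of `(B, B′)` is a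
permutation matrix; the assignment `(B, B′) ↦ (its permutation)` induces a bijection
between the set of orbits of the diagonal `GL_d(ℂ)`-action on pairs of complete flags
and the symmetric group `S_d`: it is constant exactly on orbits and every permutation
arises. -/
theorem complete_flag_orbits_bijective_perm {d : ℕ} (hd : 0 < d) :
    (∀ B B' : Fin (d + 1) → Submodule ℂ (Fin d → ℂ),
      IsCompleteFlag B → IsCompleteFlag B' →
      ∃ σ : Equiv.Perm (Fin d), ∀ i j : Fin d,
        invMatrix B B' i j = if σ i = j then 1 else 0) ∧
    (∀ B B' G G' : Fin (d + 1) → Submodule ℂ (Fin d → ℂ),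
      IsCompleteFlag B → IsCompleteFlag B' → IsCompleteFlag G → IsCompleteFlag G' →
      ∀ σ τ : Equiv.Perm (Fin d),
        (∀ i j : Fin d, invMatrix B B' i j = if σ i = j then 1 else 0) →
        (∀ i j : Fin d, invMatrix G G' i j = if τ i = j then 1 else 0) →
        (SameOrbit (B, B') (G, G') ↔ σ = τ)) ∧
    (∀ σ : Equiv.Perm (Fin d),
      ∃ B B' : Fin (d + 1) → Submodule ℂ (Fin d → ℂ),
        IsCompleteFlag B ∧ IsCompleteFlag B' ∧
        ∀ i j : Fin d, invMatrix B B' i j = if σ i = j then 1 else 0) := by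
  refine ⟨fun B B' h h' => exists_perm B B' h h', ?_, exists_flags⟩
  intro B B' G G' hB hB' hG hG' σ τ hσ hτ
  constructor
  · intro h
    symm
    apply perm_unique
    intro i
    rw [← hτ, ← invMatrix_of_sameOrbit B B' G G' hB hB' hG hG' h, hσ]
    simp
  · rintro rfl
    exact sameOrbit_of B B' G G' hB hB' hG hG' σ hσ hτ
end

section
/- Let n and d be positive integers, V = ℂ^n and T = V^{⊗d} the d-th tensor power of V over ℂ. For g ∈ GL(V) let g^{⊗d} ∈ End_ℂ(T) be the induced operator on T, and for σ ∈ S_d let P_σ ∈ End_ℂ(T) be the operator permuting the tensor factors, P_σ(v_1 ⊗ ⋯ ⊗ v_d) = v_{σ^{−1}(1)} ⊗ ⋯ ⊗ v_{σ^{−1}(d)}. Then the centralizer in End_ℂ(T) of the set {g^{⊗d} : g ∈ GL(V)} equals the ℂ-linear span of {P_σ : σ ∈ S_d}. -/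
open PiTensorProduct

/-- The `d`-th tensor power `T = (ℂ^n)^{⊗d}` of `ℂ^n` over `ℂ`. -/
abbrev TensorPow (n d : ℕ) : Type :=
  PiTensorProduct ℂ (fun _ : Fin d => Fin n → ℂ)

/-- For `g ∈ GL(ℂ^n)`, the induced operator `g^{⊗d}` on the tensor power. -/
noncomputable def tensorPowMap (n d : ℕ) (g : (Fin n → ℂ) ≃ₗ[ℂ] (Fin n → ℂ)) :
    TensorPow n d →ₗ[ℂ] TensorPow n d :=
  PiTensorProduct.map fun _ : Fin d => (g : (Fin n → ℂ) →ₗ[ℂ] (Fin n → ℂ))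

/-- For `σ ∈ S_d`, the operator `P_σ` permuting the tensor factors:
`P_σ (v_1 ⊗ ⋯ ⊗ v_d) = v_{σ⁻¹(1)} ⊗ ⋯ ⊗ v_{σ⁻¹(d)}`. -/
noncomputable def permFactors (n d : ℕ) (σ : Equiv.Perm (Fin d)) :
    TensorPow n d →ₗ[ℂ] TensorPow n d :=
  (PiTensorProduct.reindex ℂ (fun _ : Fin d => Fin n → ℂ) σ).toLinearMap


theorem sw_density {R T : Type*} [Ring R] [AddCommGroup T] [Module R T] [IsSemisimpleRing R]
    (f : T →+ T) (hf : ∀ (u : T →ₗ[R] T) (x : T), f (u x) = u (f x))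
    {ι : Type*} [Fintype ι] (e : ι → T) : ∃ r : R, ∀ i, f (e i) = r • e i := by
  classical
  obtain ⟨q, hq⟩ := exists_isCompl (Submodule.span R ({e} : Set (ι → T)))
  set S := Submodule.span R ({e} : Set (ι → T)) with hS
  let p : (ι → T) →ₗ[R] (ι → T) := S.subtype ∘ₗ S.projectionOnto q hq
  have hcomm : ∀ x : ι → T, (fun i => f (p x i)) = p (fun i => f (x i)) := by
    intro x
    have hx : ∀ y : ι → T, p y = ∑ j, p (Pi.single j (y j)) := by
      intro y
      rw [← map_sum, Finset.univ_sum_single]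
    funext i
    rw [hx x, hx (fun i => f (x i)), Finset.sum_apply, Finset.sum_apply, map_sum]
    refine Finset.sum_congr rfl fun j _ => ?_
    exact hf (LinearMap.proj i ∘ₗ p ∘ₗ LinearMap.single R (fun _ : ι => T) j) (x j)
  have hpe : p e = e := by
    have he : e ∈ S := Submodule.mem_span_singleton_self e
    exact congrArg Subtype.val (Submodule.projectionOnto_apply_left hq ⟨e, he⟩)
  have hmem : (fun i => f (e i)) ∈ S := by
    have := hcomm e
    rw [hpe] at this
    rw [this]
    exact Subtype.property _
  obtain ⟨r, hr⟩ := Submodule.mem_span_singleton.1 hmem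
  exact ⟨r, fun i => (congrFun hr i).symm⟩

theorem sw_lemmaA {n d : ℕ}
    (m : MultilinearMap ℂ (fun _ : Fin d => (Fin n → ℂ) →ₗ[ℂ] (Fin n → ℂ)) ℂ)
    (h : ∀ g : (Fin n → ℂ) ≃ₗ[ℂ] (Fin n → ℂ), m (fun _ => (g : (Fin n → ℂ) →ₗ[ℂ] (Fin n → ℂ))) = 0)
    (A : (Fin n → ℂ) →ₗ[ℂ] (Fin n → ℂ)) : m (fun _ => A) = 0 := by
  classical
  let p : Polynomial ℂ := ∑ s : Finset (Fin d),
    Polynomial.C (m (s.piecewise (fun _ => A) (fun _ => LinearMap.id))) *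
      ∏ i : Fin d, (if i ∈ s then 1 else Polynomial.X)
  have hp : ∀ t : ℂ, p.eval t = m (fun _ => A + t • LinearMap.id) := by
    intro t
    have : (fun _ : Fin d => A + t • LinearMap.id) =
      (fun _ : Fin d => A) + (fun _ : Fin d => t • (LinearMap.id : (Fin n → ℂ) →ₗ[ℂ] _)) := rfl
    rw [this, MultilinearMap.map_add_univ, Polynomial.eval_finsetSum]
    refine Finset.sum_congr rfl fun s _ => ?_
    have h2 : s.piecewise (fun _ : Fin d => A) (fun _ : Fin d => t • LinearMap.id) =
      fun i => (if i ∈ s then (1 : ℂ) else t) •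
        (s.piecewise (fun _ : Fin d => A) (fun _ => LinearMap.id) i) := by
      funext i
      by_cases hi : i ∈ s <;> simp [hi]
    rw [h2, MultilinearMap.map_smul_univ, Polynomial.eval_mul, Polynomial.eval_C,
      Polynomial.eval_prod, smul_eq_mul, mul_comm]
    congr 1
    refine Finset.prod_congr rfl fun i _ => ?_
    split_ifs <;> simp
  have hfin : (spectrum ℂ (-A : Module.End ℂ (Fin n → ℂ))).Finite := Module.End.finite_spectrum _
  have hp0 : p = 0 := by
    apply Polynomial.eq_zero_of_infinite_isRoot
    refine hfin.infinite_compl.mono fun t ht => ?_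
    have hu : IsUnit (algebraMap ℂ (Module.End ℂ (Fin n → ℂ)) t - (-A)) :=
      spectrum.notMem_iff.1 ht
    obtain ⟨u, hu⟩ := hu
    have := h (LinearMap.GeneralLinearGroup.generalLinearEquiv ℂ _ u)
    change p.eval t = 0
    rw [hp, ← this]
    congr 1
    funext _
    apply LinearMap.ext
    intro x
    have hx := LinearMap.congr_fun hu x
    simp only [LinearMap.add_apply, LinearMap.smul_apply, LinearMap.id_apply]
    refine Eq.trans ?_ hx.symm
    simp [Module.algebraMap_end_apply, add_comm]
  have := hp 0
  rw [hp0] at this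
  simpa using this.symm

theorem sw_lemmaB {d : ℕ} {E : Type*} [AddCommGroup E] [Module ℂ E]
    (m : MultilinearMap ℂ (fun _ : Fin d => E) ℂ)
    (h : ∀ x : E, m (fun _ => x) = 0) (A : Fin d → E) :
    ∑ σ : Equiv.Perm (Fin d), m (fun i => A (σ i)) = 0 := by
  classical
  let p : MvPolynomial (Fin d) ℂ := ∑ r : Fin d → Fin d,
    MvPolynomial.monomial (∑ i, Finsupp.single (r i) 1) (m (fun i => A (r i)))
  have hp : p = 0 := by
    apply MvPolynomial.funext
    intro t
    have := h (∑ j, t j • A j)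
    rw [MultilinearMap.map_sum] at this
    rw [map_zero, ← this, map_sum]
    refine Finset.sum_congr rfl fun r _ => ?_
    rw [MultilinearMap.map_smul_univ m (fun i => t (r i)) (fun i => A (r i)), MvPolynomial.eval_monomial, smul_eq_mul, mul_comm]
    congr 1
    rw [Finsupp.prod_pow]
    simp only [Finsupp.coe_finsetSum, Finset.sum_apply, Finset.prod_pow_eq_pow_sum,
      ← Finset.prod_pow_eq_pow_sum]
    rw [Finset.prod_comm]
    refine Finset.prod_congr rfl fun i _ => ?_
    rw [Finset.prod_eq_single (r i)] <;> simp +contextual [Finsupp.single_apply, eq_comm]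
  have hc := congrArg (MvPolynomial.coeff (∑ i : Fin d, Finsupp.single i 1)) hp
  rw [MvPolynomial.coeff_sum, MvPolynomial.coeff_zero] at hc
  rw [← hc]
  refine Finset.sum_of_injOn (fun σ : Equiv.Perm (Fin d) => (σ : Fin d → Fin d)) ?_ ?_ ?_ ?_
  · intro a _ b _ hab
    exact DFunLike.coe_injective hab
  · intro a _
    simp
  · intro r _ hr
    rw [MvPolynomial.coeff_monomial, if_neg]
    intro heq
    apply hr
    have hsurj : Function.Surjective r := by
      intro j
      by_contra hj
      push Not at hj
      have h1 := DFunLike.congr_fun heq j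
      simp [Finsupp.single_apply, hj] at h1
    exact ⟨Equiv.ofBijective r (Finite.surjective_iff_bijective.1 hsurj), by simp, rfl⟩
  · intro σ _
    rw [MvPolynomial.coeff_monomial, if_pos]
    exact Equiv.sum_comp σ (fun i => Finsupp.single i 1)

theorem sw_span {n d : ℕ} (M : TensorPow n d →ₗ[ℂ] TensorPow n d) :
    M ∈ Submodule.span ℂ (Set.range fun A : Fin d → ((Fin n → ℂ) →ₗ[ℂ] (Fin n → ℂ)) =>
      (PiTensorProduct.map A : TensorPow n d →ₗ[ℂ] TensorPow n d)) := by
  classical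
  let b := Basis.piTensorProduct (fun _ : Fin d => Pi.basisFun ℂ (Fin n))
  have key : M = ∑ q : Fin d → Fin n, ∑ p : Fin d → Fin n, (b.repr (M (b q)) p) •
      (PiTensorProduct.map fun i => Matrix.toLin' (Matrix.single (p i) (q i) (1 : ℂ))) := by
    refine b.ext fun q' => ?_
    rw [LinearMap.sum_apply, Finset.sum_eq_single q']
    · conv_lhs => rw [← b.sum_repr (M (b q'))]
      rw [LinearMap.sum_apply]
      refine Finset.sum_congr rfl fun p _ => ?_
      rw [LinearMap.smul_apply]
      congr 1
      simp only [b, Basis.piTensorProduct_apply, PiTensorProduct.map_tprod]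
      congr 1
      funext i
      ext j
      simp [Matrix.single_apply, Pi.single_apply, Matrix.col, eq_comm]
    · intro q _ hq
      rw [LinearMap.sum_apply]
      refine Finset.sum_eq_zero fun p _ => ?_
      obtain ⟨i, hi⟩ := Function.ne_iff.1 hq
      rw [LinearMap.smul_apply]
      simp only [b, Basis.piTensorProduct_apply, PiTensorProduct.map_tprod]
      refine (congrArg _ (MultilinearMap.map_coord_zero (PiTensorProduct.tprod ℂ) i ?_)).trans
        (smul_zero _)
      ext j
      simp [Matrix.single_apply, Matrix.col, hi]
    · simp
  rw [key]
  refine Submodule.sum_mem _ fun q _ => Submodule.sum_mem _ fun p _ => Submodule.smul_mem _ _ ?_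
  exact Submodule.subset_span ⟨_, rfl⟩

noncomputable def swRep (n d : ℕ) : Equiv.Perm (Fin d) →* Module.End ℂ (TensorPow n d) where
  toFun := permFactors n d
  map_one' := by
    apply PiTensorProduct.ext
    refine MultilinearMap.ext fun v => ?_
    simp [permFactors]
    rfl
  map_mul' σ τ := by
    apply PiTensorProduct.ext
    refine MultilinearMap.ext fun v => ?_
    simp [permFactors, PiTensorProduct.reindex_tprod, Equiv.Perm.mul_def]
    rfl

theorem sw_perm_map {n d : ℕ} (σ : Equiv.Perm (Fin d))
    (A : Fin d → ((Fin n → ℂ) →ₗ[ℂ] (Fin n → ℂ))) :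
    permFactors n d σ ∘ₗ PiTensorProduct.map A =
      PiTensorProduct.map (fun i => A (σ.symm i)) ∘ₗ permFactors n d σ := by
  apply PiTensorProduct.ext
  refine MultilinearMap.ext fun v => ?_
  simp [permFactors, PiTensorProduct.reindex_tprod]

noncomputable def swL {T : Type*} [AddCommGroup T] [Module ℂ T] (f : Module.End ℂ T) :
    Module.End ℂ T →ₗ[ℂ] Module.End ℂ T :=
  LinearMap.mulLeft ℂ f - LinearMap.mulRight ℂ f

theorem swL_eq_zero {T : Type*} [AddCommGroup T] [Module ℂ T] (f X : Module.End ℂ T) :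
    swL f X = 0 ↔ f * X = X * f := by
  change f * X - X * f = 0 ↔ _
  rw [sub_eq_zero]

/-- An operator commuting with all `g^{⊗d}` commutes with the commutant of the symmetric group. -/
theorem sw_step {n d : ℕ} (f : Module.End ℂ (TensorPow n d))
    (hf : ∀ g : (Fin n → ℂ) ≃ₗ[ℂ] (Fin n → ℂ), f ∘ₗ tensorPowMap n d g = tensorPowMap n d g ∘ₗ f)
    (M : Module.End ℂ (TensorPow n d)) (hM : ∀ σ, swRep n d σ * M = M * swRep n d σ) :
    f * M = M * f := by
  classical
  let L : Module.End ℂ (TensorPow n d) →ₗ[ℂ] Module.End ℂ (TensorPow n d) :=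
    swL f
  have hL : ∀ X, L X = 0 ↔ f * X = X * f := swL_eq_zero f
  have h1 : ∀ A : Fin d → ((Fin n → ℂ) →ₗ[ℂ] (Fin n → ℂ)),
      L (∑ σ : Equiv.Perm (Fin d), PiTensorProduct.map (fun i => A (σ i))) = 0 := by
    intro A
    rw [← Module.forall_dual_apply_eq_zero_iff ℂ]
    intro φ
    rw [map_sum, map_sum]
    refine sw_lemmaB ((φ ∘ₗ L).compMultilinearMap
      (PiTensorProduct.mapMultilinear ℂ (fun _ : Fin d => Fin n → ℂ) (fun _ => Fin n → ℂ))) ?_ A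
    refine sw_lemmaA _ fun g => ?_
    change φ (L (tensorPowMap n d g)) = 0
    have : L (tensorPowMap n d g) = 0 := by
      rw [hL]; exact hf g
    rw [this, map_zero]
  -- averaging
  let Av : Module.End ℂ (TensorPow n d) →ₗ[ℂ] Module.End ℂ (TensorPow n d) :=
    ∑ σ : Equiv.Perm (Fin d),
      LinearMap.mulLeft ℂ (swRep n d σ⁻¹) ∘ₗ LinearMap.mulRight ℂ (swRep n d σ)
  have hAv : ∀ X, Av X = ∑ σ : Equiv.Perm (Fin d), swRep n d σ⁻¹ * (X * swRep n d σ) := by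
    intro X
    simp [Av, LinearMap.sum_apply]
  have h2 : ∀ X, L (Av X) = 0 := by
    intro X
    induction sw_span X using Submodule.span_induction with
    | mem x hx =>
      obtain ⟨A, rfl⟩ := hx
      rw [← h1 A, hAv]
      congr 1
      refine Finset.sum_congr rfl fun σ _ => ?_
      have := sw_perm_map σ⁻¹ A
      change swRep n d σ⁻¹ * PiTensorProduct.map A = _ * swRep n d σ⁻¹ at this
      rw [← mul_assoc, this, mul_assoc, ← map_mul]
      simp
      rfl
    | zero => simp
    | add x y _ _ hx hy => rw [map_add, map_add, hx, hy, add_zero]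
    | smul c x _ hx => rw [map_smul, map_smul, hx, smul_zero]
  have h3 : Av M = (Fintype.card (Equiv.Perm (Fin d)) : ℂ) • M := by
    rw [hAv]
    have : ∀ σ : Equiv.Perm (Fin d), swRep n d σ⁻¹ * (M * swRep n d σ) = M := by
      intro σ
      rw [← hM, ← mul_assoc, ← map_mul]
      simp
    simp [this, Nat.cast_smul_eq_nsmul]
  have h4 := h2 M
  rw [h3, map_smul, smul_eq_zero] at h4
  rcases h4 with h4 | h4
  · exact absurd h4 (Nat.cast_ne_zero.2 Fintype.card_ne_zero)
  · rwa [hL] at h4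

theorem sw_mem {n d : ℕ} (f : Module.End ℂ (TensorPow n d))
    (hf : ∀ g : (Fin n → ℂ) ≃ₗ[ℂ] (Fin n → ℂ), f ∘ₗ tensorPowMap n d g = tensorPowMap n d g ∘ₗ f) :
    f ∈ Submodule.span ℂ (Set.range (permFactors n d)) := by
  classical
  let Φ : MonoidAlgebra ℂ (Equiv.Perm (Fin d)) →ₐ[ℂ] Module.End ℂ (TensorPow n d) :=
    MonoidAlgebra.lift ℂ _ _ (swRep n d)
  letI : Module (MonoidAlgebra ℂ (Equiv.Perm (Fin d))) (TensorPow n d) :=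
    Module.compHom (TensorPow n d) Φ.toRingHom
  have hsm : ∀ (r : MonoidAlgebra ℂ (Equiv.Perm (Fin d))) (x : TensorPow n d),
    r • x = Φ r x := fun _ _ => rfl
  haveI : NeZero (Nat.card (Equiv.Perm (Fin d)) : ℂ) := ⟨Nat.cast_ne_zero.2 Nat.card_pos.ne'⟩
  haveI : IsSemisimpleRing (MonoidAlgebra ℂ (Equiv.Perm (Fin d))) := inferInstance
  let b := Basis.piTensorProduct (fun _ : Fin d => Pi.basisFun ℂ (Fin n))
  obtain ⟨r, hr⟩ := sw_density (R := MonoidAlgebra ℂ (Equiv.Perm (Fin d))) f.toAddMonoidHom (by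
    intro u x
    let M : Module.End ℂ (TensorPow n d) :=
      { toFun := u
        map_add' := map_add u
        map_smul' := by
          intro c x
          have := u.map_smul (algebraMap ℂ _ c) x
          rw [hsm, hsm, AlgHom.commutes] at this
          simpa [Module.algebraMap_end_apply] using this }
    have := sw_step f hf M (by
      intro σ
      apply LinearMap.ext
      intro x
      have := u.map_smul (MonoidAlgebra.of ℂ _ σ) x
      rw [hsm, hsm] at this
      simp only [Φ, MonoidAlgebra.lift_of] at this
      exact this.symm)
    exact LinearMap.congr_fun this x) b
  have hfr : f = Φ r := b.ext hr
  rw [hfr, MonoidAlgebra.lift_apply]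
  refine Submodule.sum_mem _ fun σ _ => Submodule.smul_mem _ _ (Submodule.subset_span ⟨σ, rfl⟩)

/-- Schur duality, first half: the centralizer in `End_ℂ((ℂ^n)^{⊗d})` of the operators
`g^{⊗d}`, `g ∈ GL(ℂ^n)`, is exactly the `ℂ`-linear span of the permutation operators
`P_σ`, `σ ∈ S_d`. -/
theorem centralizer_tensorPow_eq_span_perm {n d : ℕ} (hn : 0 < n) (hd : 0 < d) :
    {f : TensorPow n d →ₗ[ℂ] TensorPow n d |
        ∀ g : (Fin n → ℂ) ≃ₗ[ℂ] (Fin n → ℂ),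
          f ∘ₗ tensorPowMap n d g = tensorPowMap n d g ∘ₗ f} =
      ↑(Submodule.span ℂ (Set.range (permFactors n d))) := by
  apply Set.Subset.antisymm
  · intro f hf
    exact sw_mem f hf
  · intro f hf g
    induction hf using Submodule.span_induction with
    | mem x hx =>
      obtain ⟨σ, rfl⟩ := hx
      exact sw_perm_map σ _
    | zero => simp
    | add x y _ _ hx hy => rw [LinearMap.add_comp, LinearMap.comp_add, hx, hy]
    | smul c x _ hx => rw [LinearMap.smul_comp, LinearMap.comp_smul, hx]
end

section
/- Let n and d be positive integers, V = ℂ^n and T = V^{⊗d} the d-th tensor power of V over ℂ. For g ∈ GL(V) let g^{⊗d} ∈ End_ℂ(T) be the induced operator on T, and for σ ∈ S_d let P_σ ∈ End_ℂ(T) be the operator permuting the tensor factors, P_σ(v_1 ⊗ ⋯ ⊗ v_d) = v_{σ^{−1}(1)} ⊗ ⋯ ⊗ v_{σ^{−1}(d)}. Then the centralizer in End_ℂ(T) of the set {P_σ : σ ∈ S_d} equals the ℂ-linear span of {g^{⊗d} : g ∈ GL(V)}. -/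
open PiTensorProduct

section Helpers

open Finset

theorem sd_coeff {d : ℕ} (f : Fin d → Fin d) :
    (∑ S : Finset (Fin d), (-1 : ℂ) ^ S.card * ∏ i, (if f i ∈ S then (1 : ℂ) else 0)) =
      if Function.Bijective f then (-1 : ℂ) ^ d else 0 := by
  classical
  split_ifs with hf
  · rw [Finset.sum_eq_single Finset.univ]
    · simp
    · intro S _ hS
      obtain ⟨j, hj⟩ : ∃ j, j ∉ S := by
        by_contra! h
        exact hS (Finset.eq_univ_iff_forall.2 h)
      obtain ⟨i, rfl⟩ := hf.2 j
      rw [Finset.prod_eq_zero (Finset.mem_univ i) (by simp [hj]), mul_zero]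
    · simp
  · have hs : ¬ Function.Surjective f := fun h => hf (Finite.surjective_iff_bijective.1 h)
    obtain ⟨j, hj⟩ : ∃ j, ∀ i, f i ≠ j := by simpa [Function.Surjective] using hs
    have key : ∀ S : Finset (Fin d), j ∉ S →
        ((-1 : ℂ) ^ S.card * ∏ i, (if f i ∈ S then (1 : ℂ) else 0)) +
        ((-1 : ℂ) ^ (insert j S).card * ∏ i, (if f i ∈ insert j S then (1 : ℂ) else 0)) = 0 := by
      intro S hS
      have : ∀ i, (f i ∈ insert j S) = (f i ∈ S) := by
        intro i; simp [hj i]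
      simp only [this, Finset.card_insert_of_notMem hS, pow_succ]
      ring
    refine Finset.sum_involution
      (fun S _ => if j ∈ S then S.erase j else insert j S) ?_ ?_ ?_ ?_
    · intro S _
      by_cases h : j ∈ S
      · have := key (S.erase j) (by simp)
        rw [Finset.insert_erase h] at this
        simp only [h, if_true]
        rw [add_comm]; exact this
      · simp only [h, if_false]
        exact key S h
    · intro S _ _ h
      by_cases hS : j ∈ S
      · simp only [hS, if_true] at h
        rw [← h] at hS; simp at hS
      · simp only [hS, if_false] at h
        exact hS (h ▸ Finset.mem_insert_self j S)
    · intros; simp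
    · intro S _
      by_cases hS : j ∈ S <;> simp [hS]

theorem sd_polar {d : ℕ} {M N : Type*} [AddCommMonoid M] [Module ℂ M] [AddCommMonoid N] [Module ℂ N]
    (m : MultilinearMap ℂ (fun _ : Fin d => M) N) (U : Submodule ℂ N)
    (h : ∀ x, m (fun _ => x) ∈ U) (A : Fin d → M) :
    ∑ σ : Equiv.Perm (Fin d), m (fun i => A (σ i)) ∈ U := by
  classical
  have e : ∑ S : Finset (Fin d), (-1 : ℂ) ^ S.card •
      m (fun _ => ∑ j, (if j ∈ S then (1 : ℂ) else 0) • A j) =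
      (-1 : ℂ) ^ d • ∑ σ : Equiv.Perm (Fin d), m (fun i => A (σ i)) := by
    have : ∀ S : Finset (Fin d), (-1 : ℂ) ^ S.card •
      m (fun _ => ∑ j, (if j ∈ S then (1 : ℂ) else 0) • A j) =
      ∑ f : Fin d → Fin d, ((-1 : ℂ) ^ S.card * ∏ i, (if f i ∈ S then (1 : ℂ) else 0)) •
        m (fun i => A (f i)) := by
      intro S
      rw [MultilinearMap.map_sum, Finset.smul_sum]
      refine Finset.sum_congr rfl fun f _ => ?_
      rw [MultilinearMap.map_smul_univ m (fun i => if f i ∈ S then (1 : ℂ) else 0)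
        (fun i => A (f i)), smul_smul]
    simp_rw [this]
    rw [Finset.sum_comm]
    simp_rw [← Finset.sum_smul, sd_coeff, ite_smul, zero_smul]
    rw [← Finset.sum_filter, Finset.smul_sum]
    symm
    refine Finset.sum_bij (fun σ _ => (σ : Fin d → Fin d)) ?_ ?_ ?_ ?_
    · intro σ _; exact Finset.mem_filter.2 ⟨Finset.mem_univ _, σ.bijective⟩
    · intro σ _ τ _ hh; exact DFunLike.coe_injective hh
    · intro f hf
      exact ⟨Equiv.ofBijective f ((Finset.mem_filter.1 hf).2), by simp, rfl⟩
    · intro σ _; rfl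
  have h2 : (-1 : ℂ) ^ d • ∑ σ : Equiv.Perm (Fin d), m (fun i => A (σ i)) ∈ U := by
    rw [← e]
    exact Submodule.sum_mem _ fun S _ => U.smul_mem _ (h _)
  exact (Submodule.smul_mem_iff U (pow_ne_zero d (by norm_num))).1 h2

theorem sd_sep {N : Type*} [hN : AddCommMonoid N] [Module ℂ N] (U : Submodule ℂ N) (x : N)
    (hx : x ∉ U) : ∃ φ : N →ₗ[ℂ] ℂ, φ x ≠ 0 ∧ ∀ u ∈ U, φ u = 0 := by
  letI : AddCommGroup N := Module.addCommMonoidToAddCommGroup ℂ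
  obtain ⟨φ, hφ, hU⟩ := Submodule.exists_le_ker_of_notMem hx
  exact ⟨φ, hφ, fun u hu => hU hu⟩

theorem sd_dense (n d : ℕ) (B : (Fin n → ℂ) →ₗ[ℂ] (Fin n → ℂ)) :
    PiTensorProduct.mapMultilinear ℂ (fun _ : Fin d => Fin n → ℂ) (fun _ => Fin n → ℂ)
      (fun _ => B) ∈ Submodule.span ℂ (Set.range (tensorPowMap n d)) := by
  classical
  set m := PiTensorProduct.mapMultilinear ℂ (fun _ : Fin d => Fin n → ℂ) (fun _ => Fin n → ℂ)
    with hm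
  by_contra hB
  obtain ⟨φ, hφ, hU⟩ := sd_sep _ _ hB
  let p : Polynomial ℂ := ∑ s : Finset (Fin d),
    Polynomial.C (φ (m (s.piecewise (fun _ => B) (fun _ => 1)))) * Polynomial.X ^ (sᶜ).card
  have hp : ∀ t : ℂ, p.eval t = φ (m (fun _ => B + t • 1)) := by
    intro t
    have := m.map_add_univ (fun _ => B) (fun _ => t • 1)
    have h3 : (fun _ : Fin d => B + t • (1 : (Fin n → ℂ) →ₗ[ℂ] (Fin n → ℂ))) =
      (fun _ => B) + (fun _ => t • 1) := rfl
    rw [h3, this, map_sum]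
    simp only [p, Polynomial.eval_finset_sum, Polynomial.eval_mul, Polynomial.eval_C,
      Polynomial.eval_pow, Polynomial.eval_X]
    refine Finset.sum_congr rfl fun s _ => ?_
    have h4 : s.piecewise (fun _ => B)
        (fun _ : Fin d => t • (1 : (Fin n → ℂ) →ₗ[ℂ] (Fin n → ℂ))) =
        fun i => (if i ∈ s then 1 else t) • s.piecewise (fun _ => B) (fun _ => 1) i := by
      funext i
      by_cases hi : i ∈ s <;> simp [hi]
    rw [h4, MultilinearMap.map_smul_univ, map_smul, smul_eq_mul, mul_comm]
    congr 1
    rw [Finset.prod_ite]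
    simp [Finset.filter_not, Finset.compl_eq_univ_sdiff]
  have hz : p = 0 := by
    refine Polynomial.eq_zero_of_infinite_isRoot p ?_
    have hfin : (spectrum ℂ (-B)).Finite := Module.End.finite_spectrum (-B)
    refine hfin.infinite_compl.mono ?_
    intro t ht
    have hu : IsUnit (B + t • (1 : Module.End ℂ (Fin n → ℂ))) := by
      have := spectrum.notMem_iff.1 ht
      rw [Algebra.algebraMap_eq_smul_one, sub_neg_eq_add, add_comm] at this
      exact this
    show p.eval t = 0
    rw [hp]
    have hb := (Module.End.isUnit_iff _).1 hu
    refine hU _ (Submodule.subset_span ⟨LinearEquiv.ofBijective _ hb, ?_⟩)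
    rfl
  apply hφ
  have := hp 0
  rw [hz] at this
  simpa using this.symm

theorem sd_span (n d : ℕ) (f : TensorPow n d →ₗ[ℂ] TensorPow n d) :
    f ∈ Submodule.span ℂ (Set.range
      (PiTensorProduct.mapMultilinear ℂ (fun _ : Fin d => Fin n → ℂ) (fun _ => Fin n → ℂ))) := by
  classical
  let b := Basis.piTensorProduct (fun _ : Fin d => Pi.basisFun ℂ (Fin n))
  let E : (Fin d → Fin n) → (Fin d → Fin n) → Fin d → ((Fin n → ℂ) →ₗ[ℂ] (Fin n → ℂ)) :=
    fun p q i => (LinearMap.proj (q i)).smulRight (Pi.single (p i) 1)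
  have : f = ∑ q, ∑ p, (b.repr (f (b q)) p) •
      PiTensorProduct.mapMultilinear ℂ (fun _ : Fin d => Fin n → ℂ) (fun _ => Fin n → ℂ)
        (E p q) := by
    have hE : ∀ p q r, PiTensorProduct.map (E p q) (b r) = if q = r then b p else 0 := by
      intro p q r
      simp only [b, Basis.piTensorProduct_apply, PiTensorProduct.map_tprod, E,
        LinearMap.smulRight_apply, LinearMap.proj_apply, Pi.basisFun_apply]
      rw [MultilinearMap.map_smul_univ]
      split_ifs with h
      · subst h; simp
      · obtain ⟨i, hi⟩ := Function.ne_iff.1 h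
        rw [Finset.prod_eq_zero (Finset.mem_univ i) (by simp [Pi.single_apply, hi]), zero_smul]
    refine b.ext fun r => ?_
    simp only [LinearMap.sum_apply, LinearMap.smul_apply, PiTensorProduct.mapMultilinear_apply, hE]
    simp only [smul_ite, smul_zero]
    rw [Finset.sum_comm]
    simp [b.sum_repr]
  rw [this]
  exact Submodule.sum_mem _ fun q _ => Submodule.sum_mem _ fun p _ =>
    Submodule.smul_mem _ _ (Submodule.subset_span ⟨_, rfl⟩)

theorem sd_perm (n d : ℕ) (σ : Equiv.Perm (Fin d)) (v : Fin d → Fin n → ℂ) :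
    permFactors n d σ (PiTensorProduct.tprod ℂ v) =
      PiTensorProduct.tprod ℂ (fun i => v (σ.symm i)) :=
  PiTensorProduct.reindex_tprod σ v

theorem sd_conj (n d : ℕ) (A : Fin d → ((Fin n → ℂ) →ₗ[ℂ] (Fin n → ℂ)))
    (σ : Equiv.Perm (Fin d)) :
    permFactors n d σ⁻¹ ∘ₗ PiTensorProduct.map A ∘ₗ permFactors n d σ =
      PiTensorProduct.map (fun i => A (σ i)) := by
  refine PiTensorProduct.ext (MultilinearMap.ext fun v => ?_)
  simp only [LinearMap.compMultilinearMap_apply, LinearMap.comp_apply,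
    PiTensorProduct.map_tprod, sd_perm]
  congr 1
  funext i
  simp [Equiv.Perm.inv_def]

theorem sd_inv (n d : ℕ) (σ : Equiv.Perm (Fin d)) :
    permFactors n d σ⁻¹ ∘ₗ permFactors n d σ = LinearMap.id := by
  have := sd_conj n d (fun _ => LinearMap.id) σ
  simpa [PiTensorProduct.map_id] using this

end Helpers

/-- Schur duality, second half: the centralizer in `End_ℂ((ℂ^n)^{⊗d})` of the
permutation operators `P_σ`, `σ ∈ S_d`, is exactly the `ℂ`-linear span of the
operators `g^{⊗d}`, `g ∈ GL(ℂ^n)`. -/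
theorem centralizer_perm_eq_span_tensorPow {n d : ℕ} (hn : 0 < n) (hd : 0 < d) :
    {f : TensorPow n d →ₗ[ℂ] TensorPow n d |
        ∀ σ : Equiv.Perm (Fin d),
          f ∘ₗ permFactors n d σ = permFactors n d σ ∘ₗ f} =
      ↑(Submodule.span ℂ (Set.range (tensorPowMap n d))) := by
  classical
  ext f
  constructor
  · intro hf
    have hf : ∀ σ : Equiv.Perm (Fin d),
      f ∘ₗ permFactors n d σ = permFactors n d σ ∘ₗ f := hf
    set U := Submodule.span ℂ (Set.range (tensorPowMap n d)) with hU
    have avg : ∀ g : TensorPow n d →ₗ[ℂ] TensorPow n d,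
        ∑ σ : Equiv.Perm (Fin d), permFactors n d σ⁻¹ ∘ₗ g ∘ₗ permFactors n d σ ∈ U := by
      intro g
      induction sd_span n d g using Submodule.span_induction with
      | mem x hx =>
        obtain ⟨A, rfl⟩ := hx
        simp only [PiTensorProduct.mapMultilinear_apply, sd_conj]
        exact sd_polar (PiTensorProduct.mapMultilinear ℂ (fun _ : Fin d => Fin n → ℂ)
          (fun _ => Fin n → ℂ)) U (sd_dense n d) A
      | zero => simp
      | add x y _ _ hx hy =>
        simp only [LinearMap.add_comp, LinearMap.comp_add, Finset.sum_add_distrib]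
        exact U.add_mem hx hy
      | smul c x _ hx =>
        simp only [LinearMap.smul_comp, LinearMap.comp_smul, ← Finset.smul_sum]
        exact U.smul_mem c hx
    have h1 := avg f
    have h2 : ∀ σ : Equiv.Perm (Fin d),
        permFactors n d σ⁻¹ ∘ₗ f ∘ₗ permFactors n d σ = f := by
      intro σ
      rw [hf, ← LinearMap.comp_assoc, sd_inv, LinearMap.id_comp]
    simp only [h2, Finset.sum_const] at h1
    rw [← Nat.cast_smul_eq_nsmul ℂ] at h1
    refine (Submodule.smul_mem_iff U ?_).1 h1
    simp [Fintype.card_perm, Nat.factorial_ne_zero]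
  · intro hf σ
    replace hf : f ∈ Submodule.span ℂ (Set.range (tensorPowMap n d)) := hf
    induction hf using Submodule.span_induction with
    | mem x hx =>
      obtain ⟨g, rfl⟩ := hx
      have h := sd_conj n d (fun _ => (g : (Fin n → ℂ) →ₗ[ℂ] (Fin n → ℂ))) σ
      have h2 := sd_inv n d σ⁻¹
      rw [inv_inv] at h2
      change permFactors n d σ⁻¹ ∘ₗ tensorPowMap n d g ∘ₗ permFactors n d σ =
        tensorPowMap n d g at h
      conv_rhs => rw [← h]
      rw [← LinearMap.comp_assoc, h2, LinearMap.id_comp]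
    | zero => simp
    | add x y _ _ hx hy => rw [LinearMap.add_comp, LinearMap.comp_add, hx, hy]
    | smul c x _ hx => rw [LinearMap.smul_comp, LinearMap.comp_smul, hx]
end

section
/- Let n, m, d be positive integers and let P denote the ℂ-vector space of homogeneous polynomials of degree d in the nm variables x_{ij} (1 ≤ i ≤ n, 1 ≤ j ≤ m). For g ∈ GL_n(ℂ) let L_g ∈ End_ℂ(P) be the algebra-substitution operator determined by x_{ij} ↦ ∑_{k=1}^n g_{ki} x_{kj}, and for h ∈ GL_m(ℂ) let R_h ∈ End_ℂ(P) be determined by x_{ij} ↦ ∑_{l=1}^m x_{il} h_{lj} (both substitutions preserve homogeneity of degree d). Then the centralizer in End_ℂ(P) of {L_g : g ∈ GL_n(ℂ)} equals the ℂ-linear span of {R_h : h ∈ GL_m(ℂ)}, and symmetrically the centralizer of {R_h : h ∈ GL_m(ℂ)} equals the ℂ-linear span of {L_g : g ∈ GL_n(ℂ)}. (This is the double-centralizer form of the (gl_n, gl_m)-duality on S^d(ℂ^n ⊗ ℂ^m).) -/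
open MvPolynomial

/-- `P = S^d(ℂ^n ⊗ ℂ^m)`: homogeneous polynomials of degree `d` in the `nm`
variables `x_{ij}`. -/
noncomputable abbrev HomogPoly (n m d : ℕ) :
    Submodule ℂ (MvPolynomial (Fin n × Fin m) ℂ) :=
  MvPolynomial.homogeneousSubmodule (Fin n × Fin m) ℂ d


namespace GLDual
open Matrix

/-- T -/
noncomputable def T (d : ℕ) {α : Type*} (g : Matrix α α ℂ) :
    Matrix (Fin d → α) (Fin d → α) ℂ := fun i' i => ∏ k, g (i' k) (i k)

/-- permutation of tensor positions -/
def pe {d : ℕ} {α : Type*} (s : Equiv.Perm (Fin d)) : (Fin d → α) ≃ (Fin d → α) where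
  toFun i := i ∘ s
  invFun i := i ∘ s.symm
  left_inv i := by ext; simp
  right_inv i := by ext; simp

lemma pe_apply {d : ℕ} {α : Type*} (s : Equiv.Perm (Fin d)) (i : Fin d → α) (k) :
  pe s i k = i (s k) := rfl

/-- invariants -/
def Inv (d : ℕ) (α β : Type*) : Submodule ℂ (Matrix (Fin d → α) (Fin d → β) ℂ) where
  carrier := {A | ∀ s : Equiv.Perm (Fin d), A.submatrix (pe s) (pe s) = A}
  add_mem' {a b} ha hb s := by
    rw [Matrix.submatrix_add, Pi.add_apply, Pi.add_apply, ha s, hb s]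
  zero_mem' s := by simp
  smul_mem' c a ha s := by
    rw [Matrix.submatrix_smul, Pi.smul_apply, Pi.smul_apply, ha s]

lemma mem_Inv {d : ℕ} {α β : Type*} {A : Matrix (Fin d → α) (Fin d → β) ℂ} :
    A ∈ Inv d α β ↔ ∀ s : Equiv.Perm (Fin d), A.submatrix (pe s) (pe s) = A := Iff.rfl

/-- averaging -/
noncomputable def sym (d : ℕ) (α β : Type*) :
    Matrix (Fin d → α) (Fin d → β) ℂ →ₗ[ℂ] Matrix (Fin d → α) (Fin d → β) ℂ where
  toFun A := ((d.factorial : ℂ))⁻¹ • ∑ s : Equiv.Perm (Fin d), A.submatrix (pe s) (pe s)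
  map_add' A B := by
    rw [← smul_add, ← Finset.sum_add_distrib]; rfl
  map_smul' c A := by
    simp only [RingHom.id_apply]
    rw [smul_comm c, Finset.smul_sum (r := c)]; rfl

lemma sym_def {d : ℕ} {α β : Type*} (A : Matrix (Fin d → α) (Fin d → β) ℂ) :
  sym d α β A = ((d.factorial : ℂ))⁻¹ • ∑ s : Equiv.Perm (Fin d), A.submatrix (pe s) (pe s) := rfl

lemma avg_const {d : ℕ} {M : Type*} [AddCommGroup M] [Module ℂ M] (A : M) :
    ((d.factorial : ℂ))⁻¹ • ∑ _s : Equiv.Perm (Fin d), A = A := by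
  rw [Finset.sum_const, Finset.card_univ, Fintype.card_perm, Fintype.card_fin,
    ← Nat.cast_smul_eq_nsmul ℂ, smul_smul, inv_mul_cancel₀, one_smul]
  exact_mod_cast d.factorial_ne_zero

lemma sym_of_inv {d : ℕ} {α β : Type*} {A : Matrix (Fin d → α) (Fin d → β) ℂ}
    (h : A ∈ Inv d α β) : sym d α β A = A := by
  rw [sym_def]
  simp_rw [mem_Inv.1 h]
  exact avg_const A

lemma sym_inv {d : ℕ} {α β : Type*} (A : Matrix (Fin d → α) (Fin d → β) ℂ) :
    sym d α β A ∈ Inv d α β := by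
  rw [mem_Inv]
  intro t
  rw [sym_def]
  ext i j
  simp only [Matrix.submatrix_apply, Matrix.smul_apply, Matrix.sum_apply]
  congr 1
  exact Fintype.sum_equiv (Equiv.mulLeft t) _ _ (fun s => rfl)

lemma mul_inv {d : ℕ} {α β γ : Type*} [Fintype β]
    {A : Matrix (Fin d → α) (Fin d → β) ℂ} {B : Matrix (Fin d → β) (Fin d → γ) ℂ}
    (hA : A ∈ Inv d α β) (hB : B ∈ Inv d β γ) : A * B ∈ Inv d α γ := by
  intro s
  rw [← Matrix.submatrix_mul_equiv A B (pe s) (pe s) (pe s), hA s, hB s]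

lemma T_inv {d : ℕ} {α : Type*} (g : Matrix α α ℂ) : (T d g : Matrix _ _ ℂ) ∈ Inv d α α := by
  intro s
  ext i j
  simp only [T, Matrix.submatrix_apply, pe_apply]
  exact Fintype.prod_equiv s _ _ (fun _ => rfl)

/-- symmetrization map to polynomials -/
noncomputable def phi (d : ℕ) (α β : Type*) [Fintype α] [Fintype β] :
    Matrix (Fin d → α) (Fin d → β) ℂ →ₗ[ℂ] MvPolynomial (α × β) ℂ where
  toFun A := ∑ i, ∑ j, A i j • ∏ k, X (i k, j k)
  map_add' A B := by simp [add_smul, Finset.sum_add_distrib]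
  map_smul' c A := by simp [Finset.smul_sum, smul_smul]

lemma phi_def {d : ℕ} {α β : Type*} [Fintype α] [Fintype β]
    (A : Matrix (Fin d → α) (Fin d → β) ℂ) :
    phi d α β A = ∑ i, ∑ j, A i j • ∏ k, X (i k, j k) := rfl

lemma phi_submatrix {d : ℕ} {α β : Type*} [Fintype α] [Fintype β]
    (A : Matrix (Fin d → α) (Fin d → β) ℂ) (s : Equiv.Perm (Fin d)) :
    phi d α β (A.submatrix (pe s) (pe s)) = phi d α β A := by
  rw [phi_def, phi_def]
  refine Fintype.sum_equiv (pe s) _ _ fun i => Fintype.sum_equiv (pe s) _ _ fun j => ?_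
  rw [Matrix.submatrix_apply]
  congr 1
  exact (Fintype.prod_equiv s _ _ (fun _ => rfl)).symm

lemma phi_sym {d : ℕ} {α β : Type*} [Fintype α] [Fintype β]
    (A : Matrix (Fin d → α) (Fin d → β) ℂ) :
    phi d α β (sym d α β A) = phi d α β A := by
  rw [sym_def, map_smul, map_sum]
  simp_rw [phi_submatrix]
  exact avg_const _

lemma prodX {d : ℕ} {σ : Type*} (q : Fin d → σ) :
    (∏ k, X (q k) : MvPolynomial σ ℂ) = monomial (∑ k, Finsupp.single (q k) 1) 1 := by
  rw [MvPolynomial.monomial_sum_one]; rfl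

lemma perm_of_sum {d : ℕ} {σ : Type*} (p q : Fin d → σ)
    (h : ∑ k, Finsupp.single (p k) 1 = ∑ k, Finsupp.single (q k) 1) :
    ∃ s : Equiv.Perm (Fin d), p = q ∘ s := by
  classical
  have hcard : ∀ (r : Fin d → σ) (c : σ), (∑ k, Finsupp.single (r k) 1 : σ →₀ ℕ) c =
      Fintype.card {k // r k = c} := by
    intro r c
    rw [Finsupp.finsetSum_apply, Fintype.card_subtype, Finset.card_filter]
    refine Finset.sum_congr rfl fun k _ => ?_
    rw [Finsupp.single_apply]
  have e : ∀ c, {k // p k = c} ≃ {k // q k = c} := fun c =>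
    Fintype.equivOfCardEq (by rw [← hcard, ← hcard, h])
  refine ⟨((Equiv.sigmaFiberEquiv p).symm.trans (Equiv.sigmaCongrRight e)).trans
    (Equiv.sigmaFiberEquiv q), ?_⟩
  ext k
  exact ((e (p k)) ⟨k, rfl⟩).2.symm

lemma phi_inj {d : ℕ} {α β : Type*} [Fintype α] [Fintype β]
    {A : Matrix (Fin d → α) (Fin d → β) ℂ} (hA : A ∈ Inv d α β) (h : phi d α β A = 0) :
    A = 0 := by
  classical
  ext i j
  have h1 := congrArg (coeff (∑ k, Finsupp.single (i k, j k) 1)) h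
  rw [phi_def] at h1
  simp only [coeff_sum, coeff_smul, coeff_zero, prodX (fun k => (_, _)), coeff_monomial] at h1
  have h2 : ∀ i' j', A i' j' • (if ∑ k, Finsupp.single (i' k, j' k) 1 =
      ∑ k, Finsupp.single (i k, j k) 1 then (1:ℂ) else 0) = A i j • (if ∑ k, Finsupp.single (i' k, j' k) 1 =
      ∑ k, Finsupp.single (i k, j k) 1 then (1:ℂ) else 0) := by
    intro i' j'
    split_ifs with hc
    · obtain ⟨s, hs⟩ := perm_of_sum (fun k => (i' k, j' k)) (fun k => (i k, j k)) hc
      have hi : i' = pe s i := by ext k; exact congrArg Prod.fst (congrFun hs k)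
      have hj : j' = pe s j := by ext k; exact congrArg Prod.snd (congrFun hs k)
      have := congrFun (congrFun (hA s) i) j
      rw [hi, hj, ← this]; rfl
    · simp
  simp_rw [h2, ← Finset.smul_sum] at h1
  rcases smul_eq_zero.1 h1 with h3 | h3
  · exact h3
  · exfalso
    rw [← Fintype.sum_prod_type'] at h3
    have : ∀ x : (Fin d → α) × (Fin d → β), (if ∑ k, Finsupp.single (x.1 k, x.2 k) 1 =
      ∑ k, Finsupp.single (i k, j k) 1 then (1:ℂ) else 0) = ((if ∑ k, Finsupp.single (x.1 k, x.2 k) 1 =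
      ∑ k, Finsupp.single (i k, j k) 1 then 1 else 0 : ℕ) : ℂ) := by
      intro x; split_ifs <;> simp
    simp_rw [this] at h3
    rw [← Nat.cast_sum, Nat.cast_eq_zero, Finset.sum_eq_zero_iff] at h3
    simpa using h3 (i, j) (Finset.mem_univ _)

/-- symmetric operators are spanned by powers of invertible ones -/
lemma span_T {d : ℕ} {α : Type*} [Fintype α] [DecidableEq α]
    {S : Matrix (Fin d → α) (Fin d → α) ℂ} (hS : S ∈ Inv d α α) :
    S ∈ Submodule.span ℂ (Set.range fun g : GL α ℂ => T d (g : Matrix α α ℂ)) := by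
  classical
  by_contra hc
  obtain ⟨l, hl2, hl⟩ := Submodule.exists_le_ker_of_notMem hc
  set lam : Matrix (Fin d → α) (Fin d → α) ℂ := fun i j => l (Matrix.single i j 1) with hlam
  have hlA : ∀ A, l A = ∑ i, ∑ j, A i j * lam i j := by
    intro A
    conv_lhs => rw [Matrix.matrix_eq_sum_single A]
    simp only [map_sum]
    refine Finset.sum_congr rfl fun i _ => Finset.sum_congr rfl fun j _ => ?_
    rw [hlam, ← smul_eq_mul, ← map_smul, Matrix.smul_single, smul_eq_mul, mul_one]
  have hev : ∀ g : Matrix α α ℂ, eval (fun q : α × α => g q.1 q.2) (phi d α α lam) = l (T d g) := by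
    intro g
    rw [hlA, phi_def]
    simp [map_sum, T, smul_eval, mul_comm]
  have h0 : phi d α α lam * (Matrix.mvPolynomialX α α ℂ).det = 0 := by
    apply MvPolynomial.funext
    intro x
    rw [map_mul, map_zero]
    have hx : eval x (phi d α α lam) = l (T d (Matrix.of fun i j => x (i, j))) := by rw [← hev]; rfl
    have hd : eval x (Matrix.mvPolynomialX α α ℂ).det = Matrix.det (Matrix.of fun i j => x (i, j)) := by
      rw [RingHom.map_det]
      congr 1
      ext i j
      simp
    rw [hx, hd]
    by_cases hdet : Matrix.det (Matrix.of fun i j => x (i, j)) = 0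
    · rw [hdet, mul_zero]
    · have : l (T d (Matrix.of fun i j => x (i, j))) = 0 :=
        hl (Submodule.subset_span ⟨Matrix.GeneralLinearGroup.mkOfDetNeZero _ hdet, rfl⟩)
      rw [this, zero_mul]
  have h1 : phi d α α lam = 0 := by
    rcases mul_eq_zero.1 h0 with h | h
    · exact h
    · exact absurd h (Matrix.det_mvPolynomialX_ne_zero α ℂ)
  have h2 : sym d α α lam = 0 := phi_inj (sym_inv _) (by rw [phi_sym, h1])
  apply hl2
  have h3 : ∀ s : Equiv.Perm (Fin d),
      ∑ i, ∑ j, S i j * lam.submatrix (pe s) (pe s) i j = l S := by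
    intro s
    rw [hlA]
    refine Fintype.sum_equiv (pe s) _ _ fun i => Fintype.sum_equiv (pe s) _ _ fun j => ?_
    rw [Matrix.submatrix_apply]
    congr 1
    exact (congrFun (congrFun (hS s) i) j).symm
  calc l S = ((d.factorial : ℂ))⁻¹ • ∑ _s : Equiv.Perm (Fin d), l S := (avg_const _).symm
    _ = ∑ i, ∑ j, S i j * sym d α α lam i j := by
        rw [← Finset.sum_congr rfl fun s _ => h3 s, sym_def, Finset.sum_comm, Finset.smul_sum]
        refine Finset.sum_congr rfl fun i _ => ?_
        rw [Finset.sum_comm, Finset.smul_sum]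
        refine Finset.sum_congr rfl fun j _ => ?_
        rw [Matrix.smul_apply, Matrix.sum_apply, smul_eq_mul, smul_eq_mul, ← Finset.mul_sum]
        ring
    _ = 0 := by simp [h2]

lemma gen_inverse {I J : Type*} [Fintype I] [Fintype J] [DecidableEq I] [DecidableEq J]
    (A : Matrix I J ℂ) : ∃ B : Matrix J I ℂ, A * B * A = A := by
  obtain ⟨g, hg⟩ := (Matrix.toLin' A).rangeRestrict.exists_rightInverse_of_surjective
    (LinearMap.range_rangeRestrict _)
  obtain ⟨g', hg'⟩ := LinearMap.exists_extend g
  refine ⟨LinearMap.toMatrix' g', ?_⟩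
  apply Matrix.toLin'.injective
  rw [Matrix.toLin'_mul, Matrix.toLin'_mul, Matrix.toLin'_toMatrix']
  refine LinearMap.ext fun x => ?_
  have h1 := LinearMap.congr_fun hg ((Matrix.toLin' A).rangeRestrict x)
  have h2 := LinearMap.congr_fun hg' ((Matrix.toLin' A).rangeRestrict x)
  have h3 := congrArg Subtype.val h1
  rw [LinearMap.comp_apply, ← h2] at h3
  exact h3

lemma F_eq {d : ℕ} {α β : Type*} [Fintype α] [Fintype β] [DecidableEq α] [DecidableEq β]
    (F : Matrix (Fin d → α) (Fin d → β) ℂ →ₗ[ℂ] Matrix (Fin d → α) (Fin d → β) ℂ)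
    (hF : ∀ A ∈ Inv d α β, F A ∈ Inv d α β)
    (hFS : ∀ S ∈ Inv d α α, ∀ A ∈ Inv d α β, F (S * A) = S * F A) :
    ∃ u ∈ Inv d β β, ∀ A ∈ Inv d α β, F A = A * u := by
  let b := Module.finBasis ℂ (Inv d α β)
  obtain ⟨B, hB⟩ := gen_inverse (Matrix.of fun (ki : Fin _ × (Fin d → α)) j => (b ki.1).1 ki.2 j)
  let ψ0 : Fin _ → Matrix (Fin d → β) (Fin d → α) ℂ := fun k => Matrix.of fun j i => B j (k, i)
  have hψ0 : ∀ k, ∑ j, (b k).1 * (ψ0 j) * (b j).1 = (b k).1 := by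
    intro k
    ext i j
    have := congrFun (congrFun hB (k, i)) j
    simp only [Matrix.mul_apply, Matrix.of_apply, Fintype.sum_prod_type] at this
    simp only [Matrix.sum_apply, Matrix.mul_apply, ψ0, Matrix.of_apply]
    exact this
  let ψ := fun k => sym d β α (ψ0 k)
  have hψ : ∀ k, ∑ j, (b k).1 * (ψ j) * (b j).1 = (b k).1 := by
    intro k
    have h1 : ∀ s : Equiv.Perm (Fin d),
        ∑ j, (b k).1 * ((ψ0 j).submatrix (pe s) (pe s)) * (b j).1 = (b k).1 := by
      intro s
      have h2 : ∀ j, (b k).1 * ((ψ0 j).submatrix (pe s) (pe s)) * (b j).1 =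
          ((b k).1 * ψ0 j * (b j).1).submatrix (pe s) (pe s) := by
        intro j
        conv_lhs => rw [← (b k).2 s, ← (b j).2 s]
        rw [Matrix.submatrix_mul_equiv, Matrix.submatrix_mul_equiv]
      simp_rw [h2]
      have h3 := (b k).2 s
      conv_lhs at h3 => rw [← hψ0 k]
      refine Eq.trans ?_ h3
      ext i j
      simp [Matrix.sum_apply]
    refine Eq.trans ?_ (avg_const (d := d) (b k).1)
    rw [← Finset.sum_congr rfl fun s _ => h1 s]
    rw [Finset.sum_comm, Finset.smul_sum]
    refine Finset.sum_congr rfl fun j _ => ?_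
    simp only [ψ, sym_def]
    rw [Matrix.mul_smul, Matrix.smul_mul, Matrix.mul_sum, Matrix.sum_mul]
  refine ⟨∑ j, ψ j * F (b j).1, ?_, ?_⟩
  · exact Submodule.sum_mem _ fun j _ => mul_inv (sym_inv _) (hF _ (b j).2)
  · intro A hA
    have : F ∘ₗ (Inv d α β).subtype =
        (mulRightLinearMap (Fin d → α) ℂ (∑ j, ψ j * F (b j).1)) ∘ₗ (Inv d α β).subtype := by
      apply b.ext
      intro k
      simp only [LinearMap.comp_apply, Submodule.subtype_apply, mulRightLinearMap_apply]
      conv_lhs => rw [← hψ k]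
      rw [map_sum, Matrix.mul_sum]
      refine Finset.sum_congr rfl fun j _ => ?_
      rw [hFS _ (mul_inv (b k).2 (sym_inv _)) _ (b j).2, Matrix.mul_assoc]
    exact LinearMap.congr_fun this ⟨A, hA⟩

lemma key {d : ℕ} {α β P : Type*} [Fintype α] [Fintype β] [DecidableEq α] [DecidableEq β]
    [AddCommGroup P] [Module ℂ P]
    (Φ : Matrix (Fin d → α) (Fin d → β) ℂ →ₗ[ℂ] P) (hsurj : Function.Surjective Φ)
    (hsym : ∀ A, Φ (sym d α β A) = Φ A) (hinj : ∀ A ∈ Inv d α β, Φ A = 0 → A = 0)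
    (L : GL α ℂ → (P →ₗ[ℂ] P)) (R : GL β ℂ → (P →ₗ[ℂ] P))
    (hL : ∀ g A, L g (Φ A) = Φ (T d (g : Matrix α α ℂ) * A))
    (hR : ∀ h A, R h (Φ A) = Φ (A * (T d (h : Matrix β β ℂ))ᵀ)) :
    {f : P →ₗ[ℂ] P | ∀ g, f ∘ₗ L g = L g ∘ₗ f} = ↑(Submodule.span ℂ (Set.range R)) := by
  apply Set.Subset.antisymm
  · intro f hf
    obtain ⟨Ψ0, hΨ0⟩ := Φ.exists_rightInverse_of_surjective (LinearMap.range_eq_top.2 hsurj)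
    let Ψ := sym d α β ∘ₗ Ψ0
    have hΨi : ∀ p, Ψ p ∈ Inv d α β := fun p => sym_inv _
    have hΦΨ : ∀ p, Φ (Ψ p) = p := fun p => by
      simp only [Ψ, LinearMap.comp_apply, hsym]
      exact LinearMap.congr_fun hΨ0 p
    have hΨΦ : ∀ A ∈ Inv d α β, Ψ (Φ A) = A := fun A hA => by
      rw [← sub_eq_zero]
      exact hinj _ (Submodule.sub_mem _ (hΨi _) hA) (by rw [map_sub, hΦΨ, sub_self])
    have hS : ∀ S ∈ Inv d α α, ∀ A, f (Φ (S * A)) = Φ (S * Ψ (f (Φ A))) := by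
      intro S hS A
      have := span_T hS
      clear hS
      induction this using Submodule.span_induction with
      | mem x hx =>
        obtain ⟨g, rfl⟩ := hx
        simp only
        rw [← hL, ← hL, hΦΨ]
        exact LinearMap.congr_fun (hf g) _
      | zero => simp
      | add x y _ _ hx hy => simp only [Matrix.add_mul, map_add, hx, hy]
      | smul a x _ hx => simp only [Matrix.smul_mul, map_smul, hx]
    obtain ⟨u, hu, hFu⟩ := F_eq (Ψ ∘ₗ f ∘ₗ Φ) (fun A _ => hΨi _) (by
      intro S hS' A hA
      simp only [LinearMap.comp_apply]
      rw [hS S hS' A, hΨΦ _ (mul_inv hS' (hΨi _))])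
    let Θ : Matrix (Fin d → β) (Fin d → β) ℂ →ₗ[ℂ] (P →ₗ[ℂ] P) :=
      LinearMap.mk₂ ℂ (fun B p => Φ (Ψ p * Bᵀ))
        (by intros; simp [Matrix.mul_add]) (by intros; simp)
        (by intros; simp [Matrix.add_mul]) (by intros; simp)
    have hut : uᵀ ∈ Inv d β β := by
      intro s
      rw [← Matrix.transpose_submatrix, hu s]
    have hf' : f = Θ uᵀ := by
      ext1 p
      simp only [Θ, LinearMap.mk₂_apply, Matrix.transpose_transpose]
      rw [← hFu _ (hΨi p)]
      simp [hΦΨ]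
    have hm := Submodule.apply_mem_span_image_of_mem_span Θ (span_T hut)
    rw [hf']
    rw [← Set.range_comp] at hm
    rw [SetLike.mem_coe]
    have : R = Θ ∘ fun g : GL β ℂ => T d (g : Matrix β β ℂ) := by
     ext1 h
     ext1 p
     simp only [Θ, Function.comp, LinearMap.mk₂_apply]
     rw [← hR, hΦΨ]
    rw [this]
    exact hm
  · intro f hf g
    simp only [SetLike.mem_coe] at hf
    induction hf using Submodule.span_induction with
    | mem x hx =>
      obtain ⟨h, rfl⟩ := hx
      ext1 p
      obtain ⟨A, rfl⟩ := hsurj p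
      simp [hL, hR, Matrix.mul_assoc]
    | zero => simp
    | add x y _ _ hx hy => rw [LinearMap.add_comp, LinearMap.comp_add, hx, hy]
    | smul a x _ hx => rw [LinearMap.smul_comp, LinearMap.comp_smul, hx]

lemma phi_hom {d : ℕ} {α β : Type*} [Fintype α] [Fintype β]
    (A : Matrix (Fin d → α) (Fin d → β) ℂ) :
    phi d α β A ∈ homogeneousSubmodule (α × β) ℂ d := by
  rw [phi_def]
  refine Submodule.sum_mem _ fun i _ => Submodule.sum_mem _ fun j _ => Submodule.smul_mem _ _ ?_
  rw [mem_homogeneousSubmodule]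
  have := IsHomogeneous.prod Finset.univ
    (fun k : Fin d => (X (i k, j k) : MvPolynomial (α × β) ℂ)) (fun _ => 1)
    (fun k _ => isHomogeneous_X _ _)
  simpa using this

lemma phi_single {d : ℕ} {α β : Type*} [Fintype α] [Fintype β] [DecidableEq α] [DecidableEq β]
    (i : Fin d → α) (j : Fin d → β) (c : ℂ) :
    phi d α β (Matrix.single i j c) = c • ∏ k, X (i k, j k) := by
  rw [phi_def, Finset.sum_eq_single i, Finset.sum_eq_single j]
  · simp
  · intro j' _ h
    rw [Matrix.single_apply_of_col_ne _ _ h.symm, zero_smul]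
  · simp
  · intro i' _ h
    refine Finset.sum_eq_zero fun j' _ => ?_
    rw [Matrix.single_apply_of_row_ne h.symm, zero_smul]
  · simp

lemma phi_surj {d : ℕ} {α β : Type*} [Fintype α] [Fintype β] [DecidableEq α] [DecidableEq β]
    (p : MvPolynomial (α × β) ℂ) (hp : p ∈ homogeneousSubmodule (α × β) ℂ d) :
    p ∈ LinearMap.range (phi d α β) := by
  rw [p.as_sum]
  refine Submodule.sum_mem _ fun v hv => ?_
  have hdeg : v.degree = d := by
    by_contra h
    exact (mem_support_iff.1 hv) (IsHomogeneous.coeff_eq_zero hp h)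
  obtain ⟨l, hl⟩ := Quotient.exists_rep (Finsupp.toMultiset v)
  have hlen : l.length = d := by
    have := congrArg Multiset.card hl
    rw [Finsupp.card_toMultiset] at this
    exact this.trans hdeg
  subst hlen
  refine ⟨Matrix.single (fun k => (l.get k).1) (fun k => (l.get k).2) (coeff v p), ?_⟩
  rw [phi_single, prodX (fun k => (_, _)), smul_monomial, smul_eq_mul, mul_one]
  refine congrArg (fun w => monomial w (coeff v p)) ?_
  classical
  apply (Function.LeftInverse.injective (g := Multiset.toFinsupp) Finsupp.toMultiset_toFinsupp)
  rw [← hl, map_sum]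
  simp only [Finsupp.toMultiset_single, one_smul]
  have h2 : (l : Multiset (α × β)) = Multiset.map l.get Finset.univ.val := by
    rw [Fin.univ_val_map, List.ofFn_get]
  refine Eq.trans ?_ h2.symm
  rw [← Multiset.sum_map_singleton (Multiset.map l.get Finset.univ.val), Multiset.map_map]
  rfl

lemma phi_L {d : ℕ} {α β : Type*} [Fintype α] [Fintype β] [DecidableEq α] [DecidableEq β]
    (g : Matrix α α ℂ) (A : Matrix (Fin d → α) (Fin d → β) ℂ) :
    aeval (fun q : α × β => ∑ k : α, C (g k q.1) * (X (k, q.2) : MvPolynomial (α × β) ℂ))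
      (phi d α β A) = phi d α β (T d g * A) := by
  rw [phi_def, phi_def]
  simp only [map_sum, map_smul, map_prod, aeval_X]
  simp_rw [Finset.prod_univ_sum, Fintype.piFinset_univ, Finset.prod_mul_distrib, ← map_prod,
    ← smul_eq_C_mul, Matrix.mul_apply, Finset.sum_smul, Finset.smul_sum, smul_smul, T]
  rw [Finset.sum_comm]
  conv_rhs => rw [Finset.sum_comm]
  refine Finset.sum_congr rfl fun j _ => ?_
  rw [Finset.sum_comm]
  simp only [mul_comm]

lemma phi_R {d : ℕ} {α β : Type*} [Fintype α] [Fintype β] [DecidableEq α] [DecidableEq β]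
    (h : Matrix β β ℂ) (A : Matrix (Fin d → α) (Fin d → β) ℂ) :
    aeval (fun q : α × β => ∑ l : β, C (h l q.2) * (X (q.1, l) : MvPolynomial (α × β) ℂ))
      (phi d α β A) = phi d α β (A * (T d h)ᵀ) := by
  rw [phi_def, phi_def]
  simp only [map_sum, map_smul, map_prod, aeval_X]
  simp_rw [Finset.prod_univ_sum, Fintype.piFinset_univ, Finset.prod_mul_distrib, ← map_prod,
    ← smul_eq_C_mul, Matrix.mul_apply, Finset.sum_smul, Finset.smul_sum, smul_smul,
    Matrix.transpose_apply, T]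
  refine Finset.sum_congr rfl fun i _ => ?_
  rw [Finset.sum_comm]

end GLDual

/-- The `(gl_n, gl_m)`-duality on `S^d(ℂ^n ⊗ ℂ^m)` in double-centralizer form.  Here
`L g` (for `g ∈ GL_n(ℂ)`) is the substitution operator `x_{ij} ↦ ∑_k g_{ki} x_{kj}`
and `R h` (for `h ∈ GL_m(ℂ)`) is the substitution operator `x_{ij} ↦ ∑_l x_{il} h_{lj}`,
both acting on the space of homogeneous polynomials of degree `d`.  The centralizer in
`End_ℂ(P)` of the `L g` is the `ℂ`-linear span of the `R h`, and vice versa. -/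
theorem centralizer_gln_glm_duality {n m d : ℕ} (hn : 0 < n) (hm : 0 < m) (hd : 0 < d)
    (L : GL (Fin n) ℂ → (HomogPoly n m d →ₗ[ℂ] HomogPoly n m d))
    (R : GL (Fin m) ℂ → (HomogPoly n m d →ₗ[ℂ] HomogPoly n m d))
    (hL : ∀ (g : GL (Fin n) ℂ) (p : HomogPoly n m d),
      (L g p : MvPolynomial (Fin n × Fin m) ℂ) =
        MvPolynomial.aeval
          (fun q : Fin n × Fin m =>
            ∑ k : Fin n, MvPolynomial.C ((g : Matrix (Fin n) (Fin n) ℂ) k q.1) *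
              MvPolynomial.X (k, q.2))
          (p : MvPolynomial (Fin n × Fin m) ℂ))
    (hR : ∀ (h : GL (Fin m) ℂ) (p : HomogPoly n m d),
      (R h p : MvPolynomial (Fin n × Fin m) ℂ) =
        MvPolynomial.aeval
          (fun q : Fin n × Fin m =>
            ∑ l : Fin m, MvPolynomial.C ((h : Matrix (Fin m) (Fin m) ℂ) l q.2) *
              MvPolynomial.X (q.1, l))
          (p : MvPolynomial (Fin n × Fin m) ℂ)) :
    ({f : HomogPoly n m d →ₗ[ℂ] HomogPoly n m d |
        ∀ g : GL (Fin n) ℂ, f ∘ₗ L g = L g ∘ₗ f} =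
      ↑(Submodule.span ℂ (Set.range R))) ∧
    ({f : HomogPoly n m d →ₗ[ℂ] HomogPoly n m d |
        ∀ h : GL (Fin m) ℂ, f ∘ₗ R h = R h ∘ₗ f} =
      ↑(Submodule.span ℂ (Set.range L))) := by
  have key1 : ∀ p : HomogPoly n m d, ∃ A, (GLDual.phi d (Fin n) (Fin m)) A = p.1 :=
    fun p => GLDual.phi_surj p.1 p.2
  let Φ : Matrix (Fin d → Fin n) (Fin d → Fin m) ℂ →ₗ[ℂ] HomogPoly n m d :=
    (GLDual.phi d (Fin n) (Fin m)).codRestrict _ GLDual.phi_hom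
  have hs : Function.Surjective Φ := by
    intro p
    obtain ⟨A, hA⟩ := key1 p
    exact ⟨A, Subtype.ext hA⟩
  have hsym : ∀ A, Φ (GLDual.sym d _ _ A) = Φ A := fun A => Subtype.ext (GLDual.phi_sym A)
  have hinj : ∀ A ∈ GLDual.Inv d (Fin n) (Fin m), Φ A = 0 → A = 0 := fun A hA h =>
    GLDual.phi_inj hA (congrArg Subtype.val h)
  have hL' : ∀ g A, L g (Φ A) = Φ (GLDual.T d (g : Matrix (Fin n) (Fin n) ℂ) * A) :=
    fun g A => Subtype.ext ((hL g (Φ A)).trans (GLDual.phi_L _ A))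
  have hR' : ∀ h A, R h (Φ A) = Φ (A * (GLDual.T d (h : Matrix (Fin m) (Fin m) ℂ)).transpose) :=
    fun h A => Subtype.ext ((hR h (Φ A)).trans (GLDual.phi_R _ A))
  refine ⟨GLDual.key Φ hs hsym hinj L R hL' hR', ?_⟩
  let τ := Matrix.transposeLinearEquiv (Fin d → Fin m) (Fin d → Fin n) ℂ ℂ
  have hτ : ∀ A, τ A = A.transpose := fun _ => rfl
  refine GLDual.key (Φ ∘ₗ τ.toLinearMap) (hs.comp τ.surjective) ?_ ?_ R L ?_ ?_
  · intro A
    have : τ (GLDual.sym d _ _ A) = GLDual.sym d _ _ (τ A) := by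
      simp only [GLDual.sym_def, hτ, Matrix.transpose_smul,
        Matrix.transpose_sum, Matrix.transpose_submatrix]
    simp only [LinearMap.comp_apply, LinearEquiv.coe_coe, this, hsym]
  · intro A hA h
    have h1 : τ A ∈ GLDual.Inv d (Fin n) (Fin m) := by
      intro s
      simp only [hτ]
      rw [← Matrix.transpose_submatrix, hA s]
    exact τ.map_eq_zero_iff.1 (hinj _ h1 h)
  · intro h A
    simp only [LinearMap.comp_apply, LinearEquiv.coe_coe, hR',
      hτ, Matrix.transpose_mul]
  · intro g A
    simp only [LinearMap.comp_apply, LinearEquiv.coe_coe, hL',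
      hτ, Matrix.transpose_mul, Matrix.transpose_transpose]
end
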